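/- arXiv:2211.06749 — 2 statements merged into one kernel-verified Lean document; each statement's English description precedes it below -/
import Mathlib

section
/- For every fixed ε > 0 there is a constant K = K(ε) such that for all integers n ≥ 1, | |C(n)|² − 64n² | ≤ K·n^{1+ε}. -/
open Real Set Filter

/-- The open interior of the box `B_{i,j}(n) = [i/n,(i+1)/n] × [j/n,(j+1)/n]`. -/
def boxInt (n : ℕ) (i j : ℤ) : Set (ℝ × ℝ) :=
  {p | (i : ℝ) / n < p.1 ∧ p.1 < ((i : ℝ) + 1) / n ∧
       (j : ℝ) / n < p.2 ∧ p.2 < ((j : ℝ) + 1) / n}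

/-- The plane unit circle `C`. -/
def unitCircle : Set (ℝ × ℝ) := {p | p.1 ^ 2 + p.2 ^ 2 = 1}

/-- The approximation `X(n)` of a set `X ⊆ ℝ²`: the boxes (encoded by their index
pairs `(i,j) ∈ ℤ²`) whose open interior intersects `X`. -/
def approx (n : ℕ) (X : Set (ℝ × ℝ)) : Set (ℤ × ℤ) :=
  {ij | (boxInt n ij.1 ij.2 ∩ X).Nonempty}


/-! ### Divisor bound in the Gaussian integers -/

/-- `DivBd x k`: the divisors of `x` lie in a finite set with at most `k` elements. -/
def DivBd (x : GaussianInt) (k : ℝ) : Prop :=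
  ∃ S : Finset GaussianInt, (∀ d, d ∣ x → d ∈ S) ∧ (S.card : ℝ) ≤ k

lemma DivBd.mono {x : GaussianInt} {k l : ℝ} (h : DivBd x k) (hkl : k ≤ l) : DivBd x l := by
  obtain ⟨S, h1, h2⟩ := h
  exact ⟨S, h1, h2.trans hkl⟩

lemma DivBd.of_dvd {x y : GaussianInt} {k : ℝ} (h : DivBd y k) (hxy : x ∣ y) : DivBd x k := by
  obtain ⟨S, h1, h2⟩ := h
  exact ⟨S, fun d hd => h1 d (hd.trans hxy), h2⟩

lemma DivBd.mul {x y : GaussianInt} {k l : ℝ} (hx : DivBd x k) (hy : DivBd y l) :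
    DivBd (x * y) (k * l) := by
  classical
  obtain ⟨S, h1, h2⟩ := hx
  obtain ⟨T, h3, h4⟩ := hy
  refine ⟨Finset.image₂ (· * ·) S T, ?_, ?_⟩
  · intro d hd
    obtain ⟨a, b, ha, hb, rfl⟩ := exists_dvd_and_dvd_of_dvd_mul hd
    exact Finset.mem_image₂_of_mem (h1 a ha) (h3 b hb)
  · calc ((Finset.image₂ (· * ·) S T).card : ℝ) ≤ ((S.card * T.card : ℕ) : ℝ) := by
          exact_mod_cast Finset.card_image₂_le _ S T
      _ = (S.card : ℝ) * T.card := by push_cast; ring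
      _ ≤ k * l := by
          apply mul_le_mul h2 h4 (by positivity)
          exact le_trans (by positivity) h2

lemma gaussian_unit (u : GaussianInt) (hu : IsUnit u) :
    u ∈ ({⟨1, 0⟩, ⟨-1, 0⟩, ⟨0, 1⟩, ⟨0, -1⟩} : Finset GaussianInt) := by
  have h := (Zsqrtd.norm_eq_one_iff' (by norm_num) u).2 hu
  rw [Zsqrtd.norm_def] at h
  obtain ⟨a, b⟩ := u
  simp only at h
  have ha : a ≤ 1 := by nlinarith [mul_self_nonneg b]
  have ha' : -1 ≤ a := by nlinarith [mul_self_nonneg b]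
  have hb : b ≤ 1 := by nlinarith
  have hb' : -1 ≤ b := by nlinarith
  interval_cases a <;> interval_cases b <;> simp_all

lemma DivBd.prime_pow {ϖ : GaussianInt} (hϖ : Prime ϖ) (e : ℕ) :
    DivBd (ϖ ^ e) (4 * (e + 1)) := by
  classical
  refine ⟨Finset.image₂ (fun k u => ϖ ^ k * u) (Finset.range (e + 1))
    ({⟨1, 0⟩, ⟨-1, 0⟩, ⟨0, 1⟩, ⟨0, -1⟩} : Finset GaussianInt), ?_, ?_⟩
  · intro d hd
    obtain ⟨i, hi, hdi⟩ := (dvd_prime_pow hϖ e).1 hd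
    obtain ⟨u, hu⟩ := hdi.symm
    rw [← hu]
    exact Finset.mem_image₂_of_mem (f := fun k u => ϖ ^ k * u)
      (Finset.mem_range.2 (by omega)) (gaussian_unit _ u.isUnit)
  · have h := Finset.card_image₂_le (fun (k : ℕ) u => ϖ ^ k * u) (Finset.range (e + 1))
      ({⟨1, 0⟩, ⟨-1, 0⟩, ⟨0, 1⟩, ⟨0, -1⟩} : Finset GaussianInt)
    have h4 := Finset.card_le_four (a := (⟨1, 0⟩ : GaussianInt)) (b := ⟨-1, 0⟩)
      (c := ⟨0, 1⟩) (d := ⟨0, -1⟩)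
    rw [Finset.card_range] at h
    have h5 := h.trans (Nat.mul_le_mul_left (e + 1) h4)
    have h6 : (((Finset.image₂ (fun (k : ℕ) u => ϖ ^ k * u) (Finset.range (e + 1))
      ({⟨1, 0⟩, ⟨-1, 0⟩, ⟨0, 1⟩, ⟨0, -1⟩} : Finset GaussianInt)).card : ℕ) : ℝ)
        ≤ (((e + 1) * 4 : ℕ) : ℝ) := by exact_mod_cast h5
    push_cast at h6
    linarith

lemma prime_star {ϖ : GaussianInt} (hϖ : Prime ϖ) : Prime (star ϖ) := by
  exact (MulEquiv.prime_iff (starMulAut (R := GaussianInt))).2 hϖ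

lemma DivBd.nat_prime_pow {p : ℕ} (hp : p.Prime) (e : ℕ) :
    DivBd ((p ^ e : ℕ) : GaussianInt) (16 * ((e : ℝ) + 1) ^ 2) := by
  have hnu : ¬ IsUnit (p : GaussianInt) := by
    intro h
    have h1 := (Zsqrtd.norm_eq_one_iff' (by norm_num) _).2 h
    rw [Zsqrtd.norm_natCast] at h1
    have := hp.two_le
    zify at this
    nlinarith
  have hne : (p : GaussianInt) ≠ 0 := by exact_mod_cast hp.ne_zero
  obtain ⟨ϖ, hϖ, hd⟩ := WfDvdMonoid.exists_irreducible_factor hnu hne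
  have hϖ' : Prime ϖ := hϖ.prime
  have hpd : (p : GaussianInt) ∣ ϖ * star ϖ := by
    rw [← Zsqrtd.norm_eq_mul_conj]
    have h1 : (p : ℤ) ∣ ϖ.norm := by
      have h2 : ϖ.norm ∣ (p : ℤ) ^ 2 := by
        obtain ⟨c, hc⟩ := hd
        refine ⟨c.norm, ?_⟩
        rw [← Zsqrtd.norm_mul, ← hc, Zsqrtd.norm_natCast, sq]
      obtain ⟨i, hi, h3⟩ := (dvd_prime_pow (Nat.prime_iff_prime_int.1 hp) 2).1 h2
      rcases Nat.eq_zero_or_pos i with rfl | hi0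
      · exfalso
        apply hϖ.not_isUnit
        rw [Zsqrtd.isUnit_iff_norm_isUnit]
        simpa using h3.symm.isUnit
      · exact (dvd_pow_self _ hi0.ne').trans h3.symm.dvd
    obtain ⟨c, hc⟩ := h1
    exact ⟨(c : GaussianInt), by rw [hc]; push_cast; rfl⟩
  have key := ((DivBd.prime_pow hϖ' e).mul (DivBd.prime_pow (prime_star hϖ') e)).of_dvd
    (x := ((p ^ e : ℕ) : GaussianInt)) (by
      rw [← mul_pow]; push_cast; exact pow_dvd_pow_of_dvd hpd e)
  exact key.mono (by nlinarith)

lemma poly_exp_bound (b : ℝ) (hb : 1 < b) :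
    ∃ K : ℝ, 1 ≤ K ∧ ∀ e : ℕ, 16 * ((e : ℝ) + 1) ^ 2 ≤ K * b ^ e := by
  have h := tendsto_pow_const_div_const_pow_of_one_lt 2 hb
  obtain ⟨M, hM⟩ := h.bddAbove_range
  have hM0 : 0 ≤ M := by
    have := hM ⟨0, rfl⟩
    simpa using this
  refine ⟨16 * M * b + 1, ?_, ?_⟩
  · have : 0 ≤ M * b := by positivity
    linarith
  · intro e
    have h1 : (((e + 1 : ℕ) : ℝ)) ^ 2 / b ^ (e + 1) ≤ M := hM ⟨e + 1, rfl⟩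
    have hbp : 0 < b ^ e := by positivity
    rw [div_le_iff₀ (by positivity)] at h1
    push_cast at h1
    rw [pow_succ b] at h1
    nlinarith

lemma small_ineq (e : ℕ) (he : 0 < e) : 16 * ((e : ℝ) + 1) ^ 2 ≤ 64 ^ e := by
  induction e, he using Nat.le_induction with
  | base => norm_num
  | succ k hk ih =>
    rw [pow_succ (64 : ℝ)]
    push_cast
    have : (0 : ℝ) ≤ k := by positivity
    nlinarith

lemma Finset.prod_le_prod_of_subset_of_one_le_real {F : ℕ → ℝ} {s t : Finset ℕ} (h : s ⊆ t)
    (hF : ∀ p, 1 ≤ F p) : ∏ p ∈ s, F p ≤ ∏ p ∈ t, F p := by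
  rw [← Finset.prod_sdiff h]
  have h1 : 1 ≤ ∏ p ∈ t \ s, F p := by
    have := Finset.prod_le_prod (s := t \ s) (f := fun _ => (1 : ℝ)) (g := F)
      (fun _ _ => zero_le_one) (fun p _ => hF p)
    simpa using this
  have h2 : 0 ≤ ∏ p ∈ s, F p := Finset.prod_nonneg fun p _ => by linarith [hF p]
  nlinarith

lemma divBd_nat (ε : ℝ) (hε : 0 < ε) :
    ∃ K : ℝ, 0 ≤ K ∧ ∀ n : ℕ, 1 ≤ n → DivBd (n : GaussianInt) (K * (n : ℝ) ^ ε) := by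
  obtain ⟨K, hK1, hK⟩ := poly_exp_bound ((2 : ℝ) ^ ε) (Real.one_lt_rpow (by norm_num) hε)
  obtain ⟨P, hP⟩ : ∃ P : ℕ, ∀ p : ℕ, P ≤ p → (64 : ℝ) ≤ (p : ℝ) ^ ε := by
    have h := ((tendsto_rpow_atTop hε).comp tendsto_natCast_atTop_atTop).eventually_ge_atTop 64
    exact eventually_atTop.1 h
  let F : ℕ → ℝ := fun p => if p < P then K else 1
  have hF1 : ∀ p, 1 ≤ F p := by
    intro p; simp only [F]; split_ifs <;> linarith
  have main : ∀ n : ℕ, 1 ≤ n →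
      DivBd (n : GaussianInt) ((∏ p ∈ n.primeFactors, F p) * 4 * (n : ℝ) ^ ε) := by
    have main' : ∀ n : ℕ, 1 < n →
        DivBd (n : GaussianInt) ((∏ p ∈ n.primeFactors, F p) * (n : ℝ) ^ ε) := by
      intro n
      induction n using Nat.recOnPosPrimePosCoprime with
      | zero => intro h; omega
      | one => intro h; omega
      | prime_pow p e hp he =>
        intro _
        refine (DivBd.nat_prime_pow hp e).mono ?_
        rw [Nat.primeFactors_prime_pow he.ne' hp, Finset.prod_singleton]
        have e1 : ((p ^ e : ℕ) : ℝ) ^ ε = ((p : ℝ) ^ ε) ^ e := by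
          push_cast
          rw [← Real.rpow_natCast, ← Real.rpow_natCast, ← Real.rpow_mul (by positivity),
            ← Real.rpow_mul (by positivity), mul_comm]
        rw [e1]
        simp only [F]
        split_ifs with hpP
        · refine (hK e).trans ?_
          have h2 : (2 : ℝ) ≤ p := by exact_mod_cast hp.two_le
          gcongr
        · rw [one_mul]
          refine (small_ineq e he).trans ?_
          have := hP p (by omega)
          gcongr
      | coprime a b ha hb hab iha ihb =>
        intro _
        have h := (iha ha).mul (ihb hb)
        rw [hab.primeFactors_mul, Finset.prod_union hab.disjoint_primeFactors]
        push_cast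
        refine h.mono (le_of_eq ?_)
        rw [Real.mul_rpow (by positivity) (by positivity)]
        ring
    intro n hn
    rcases hn.eq_or_lt with rfl | hn
    · refine ⟨({⟨1, 0⟩, ⟨-1, 0⟩, ⟨0, 1⟩, ⟨0, -1⟩} : Finset GaussianInt), ?_, ?_⟩
      · intro d hd
        exact gaussian_unit d (isUnit_of_dvd_one (by simpa using hd))
      · have h4 := Finset.card_le_four (a := (⟨1, 0⟩ : GaussianInt)) (b := ⟨-1, 0⟩)
          (c := ⟨0, 1⟩) (d := ⟨0, -1⟩)
        simp only [Nat.primeFactors_one, Finset.prod_empty, Nat.cast_one, Real.one_rpow]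
        norm_num
    · refine (main' n hn).mono ?_
      have h1 : 0 ≤ ∏ p ∈ n.primeFactors, F p :=
        Finset.prod_nonneg fun p _ => by linarith [hF1 p]
      have h2 : 0 ≤ (n : ℝ) ^ ε := by positivity
      have := mul_nonneg h1 h2
      nlinarith
  refine ⟨4 * K ^ P, by positivity, fun n hn => (main n hn).mono ?_⟩
  have : ∏ p ∈ n.primeFactors, F p ≤ K ^ P := by
    calc ∏ p ∈ n.primeFactors, F p
        ≤ ∏ p ∈ n.primeFactors ∪ Finset.range P, F p :=
          Finset.prod_le_prod_of_subset_of_one_le_real Finset.subset_union_left hF1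
      _ = ∏ p ∈ Finset.range P, F p := by
          symm
          apply Finset.prod_subset Finset.subset_union_right
          intro p _ hp
          simp only [F]
          rw [if_neg (by simpa using hp)]
      _ = ∏ p ∈ Finset.range P, K := by
          apply Finset.prod_congr rfl
          intro p hp
          simp only [F]
          rw [if_pos (by simpa using hp)]
      _ = K ^ P := by simp
  have h2 : 0 ≤ (n : ℝ) ^ ε := by positivity
  nlinarith

/-! ### Counting boxes -/

/-- First quadrant boxes. -/
def quadBoxes (n : ℕ) : Finset (ℕ × ℕ) :=
  (Finset.range n ×ˢ Finset.range n).filter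
    (fun q => q.1 ^ 2 + q.2 ^ 2 < n ^ 2 ∧ n ^ 2 < (q.1 + 1) ^ 2 + (q.2 + 1) ^ 2)

/-- Lattice points on the circle with positive coordinates (shifted by one). -/
def quadPts (n : ℕ) : Finset (ℕ × ℕ) :=
  (Finset.range n ×ˢ Finset.range n).filter
    (fun q => (q.1 + 1) ^ 2 + (q.2 + 1) ^ 2 = n ^ 2)

lemma quad_count (n : ℕ) (hn : 1 ≤ n) :
    (quadBoxes n).card + (quadPts n).card + 1 = 2 * n := by
  classical
  let R := Finset.range n ×ˢ Finset.range n
  let A := R.filter (fun q => q.1 ^ 2 + q.2 ^ 2 < n ^ 2)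
  let B := R.filter (fun q => (q.1 + 1) ^ 2 + (q.2 + 1) ^ 2 ≤ n ^ 2)
  let B' := R.filter (fun q => (q.1 + 1) ^ 2 + (q.2 + 1) ^ 2 < n ^ 2)
  have h1 : (quadBoxes n).card + B.card = A.card := by
    rw [← Finset.card_union_of_disjoint]
    · congr 1
      ext ⟨a, b⟩
      simp only [quadBoxes, A, B, R, Finset.mem_union, Finset.mem_filter, Finset.mem_product,
        Finset.mem_range]
      constructor
      · rintro (⟨h, h', _⟩ | ⟨h, h'⟩)
        · exact ⟨h, h'⟩
        · exact ⟨h, by nlinarith⟩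
      · rintro ⟨h, h'⟩
        rcases lt_or_ge (n ^ 2) ((a + 1) ^ 2 + (b + 1) ^ 2) with h2 | h2
        · exact Or.inl ⟨h, h', h2⟩
        · exact Or.inr ⟨h, h2⟩
    · rw [Finset.disjoint_left]
      rintro ⟨a, b⟩ h h'
      simp only [quadBoxes, B, Finset.mem_filter] at h h'
      omega
  have h2 : B.card = B'.card + (quadPts n).card := by
    rw [← Finset.card_union_of_disjoint]
    · congr 1
      ext ⟨a, b⟩
      simp only [quadPts, B, B', R, Finset.mem_union, Finset.mem_filter, ← and_or_left,
        le_iff_lt_or_eq]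
    · rw [Finset.disjoint_left]
      rintro ⟨a, b⟩ h h'
      simp only [quadPts, B', Finset.mem_filter] at h h'
      omega
  have h3 : A.card + 1 = B'.card + 2 * n := by
    have e1 : A = (B'.image (fun q => (q.1 + 1, q.2 + 1))) ∪
        (((Finset.range n).image (fun k => (k, 0))) ∪
          ((Finset.range (n - 1)).image (fun k => (0, k + 1)))) := by
      ext ⟨a, b⟩
      simp only [A, B', R, Finset.mem_union, Finset.mem_filter, Finset.mem_product,
        Finset.mem_range, Finset.mem_image, Prod.mk.injEq, Prod.exists]
      constructor
      · rintro ⟨⟨ha, hb⟩, h⟩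
        rcases a with _ | a
        · rcases b with _ | b
          · exact Or.inr (Or.inl ⟨0, by omega, rfl, rfl⟩)
          · exact Or.inr (Or.inr ⟨b, by omega, rfl, rfl⟩)
        · rcases b with _ | b
          · exact Or.inr (Or.inl ⟨a + 1, by omega, rfl, rfl⟩)
          · exact Or.inl ⟨a, b, ⟨⟨by omega, by omega⟩, h⟩, rfl, rfl⟩
      · rintro (⟨a', b', ⟨⟨ha, hb⟩, h⟩, rfl, rfl⟩ | ⟨k, hk, rfl, rfl⟩ | ⟨k, hk, rfl, rfl⟩)
        · refine ⟨⟨?_, ?_⟩, h⟩ <;> nlinarith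
        · exact ⟨⟨hk, by omega⟩, by nlinarith⟩
        · have : k + 1 < n := by omega
          exact ⟨⟨by omega, this⟩, by nlinarith⟩
    rw [e1, Finset.card_union_of_disjoint, Finset.card_union_of_disjoint,
      Finset.card_image_of_injective, Finset.card_image_of_injective,
      Finset.card_image_of_injective, Finset.card_range, Finset.card_range]
    · omega
    · intro a b h; simpa using h
    · intro a b h; simpa using h
    · rintro ⟨a, b⟩ ⟨c, d⟩ h; simpa using h
    · rw [Finset.disjoint_left]
      rintro ⟨a, b⟩ h h'
      simp only [Finset.mem_image, Prod.mk.injEq] at h h'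
      obtain ⟨_, _, _, _⟩ := h
      obtain ⟨_, _, _, _⟩ := h'
      omega
    · rw [Finset.disjoint_left]
      rintro ⟨a, b⟩ h h'
      simp only [Finset.mem_image, Finset.mem_union, Prod.mk.injEq] at h h'
      obtain ⟨_, _, _, _⟩ := h
      rcases h' with h' | h' <;> obtain ⟨_, _, _, _⟩ := h' <;> omega
  omega

/-- Signed index. -/
def sgnIdx (s : Bool) (a : ℕ) : ℤ := if s then (a : ℤ) else -1 - (a : ℤ)

lemma exists_sgnIdx (i : ℤ) : ∃ s a, sgnIdx s a = i := by
  rcases le_or_gt 0 i with h | h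
  · exact ⟨true, i.toNat, by simp [sgnIdx, h]⟩
  · exact ⟨false, (-1 - i).toNat, by simp only [sgnIdx]; simp; omega⟩

lemma sgnIdx_inj {s t : Bool} {a b : ℕ} (h : sgnIdx s a = sgnIdx t b) : s = t ∧ a = b := by
  cases s <;> cases t <;> simp [sgnIdx] at h ⊢ <;> omega

/-- The sign. -/
def sg (s : Bool) : ℝ := if s then 1 else -1

lemma sg_sq (s : Bool) : sg s ^ 2 = 1 := by cases s <;> simp [sg]

/-- Being in the signed interval means that the absolute coordinate is in the plain one. -/
lemma sgnIdx_Ioo (n : ℕ) (hn : 1 ≤ n) (s : Bool) (a : ℕ) (x : ℝ) :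
    ((sgnIdx s a : ℤ) : ℝ) / n < x ∧ x < (((sgnIdx s a : ℤ) : ℝ) + 1) / n ↔
      (a : ℝ) < sg s * x * n ∧ sg s * x * n < (a : ℝ) + 1 := by
  have hn' : (0 : ℝ) < n := by exact_mod_cast hn
  rw [div_lt_iff₀ hn', lt_div_iff₀ hn']
  cases s
  · simp only [sgnIdx, sg]
    push_cast
    constructor <;> rintro ⟨h1, h2⟩ <;> constructor <;> simp at * <;> linarith
  · simp [sgnIdx, sg]

lemma mem_approx (n : ℕ) (hn : 1 ≤ n) (s t : Bool) (a b : ℕ) :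
    (sgnIdx s a, sgnIdx t b) ∈ approx n unitCircle ↔
      a ^ 2 + b ^ 2 < n ^ 2 ∧ n ^ 2 < (a + 1) ^ 2 + (b + 1) ^ 2 := by
  have hn' : (0 : ℝ) < n := by exact_mod_cast hn
  have hs := sg_sq s
  have ht := sg_sq t
  constructor
  · rintro ⟨⟨x, y⟩, ⟨h1, h2, h3, h4⟩, hc⟩
    simp only [unitCircle, mem_ofPred_eq] at h1 h2 h3 h4 hc
    obtain ⟨h5, h6⟩ := (sgnIdx_Ioo n hn s a x).1 ⟨h1, h2⟩
    obtain ⟨h7, h8⟩ := (sgnIdx_Ioo n hn t b y).1 ⟨h3, h4⟩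
    have hc' : (sg s * x * n) ^ 2 + (sg t * y * n) ^ 2 = (n : ℝ) ^ 2 := by
      rw [mul_pow, mul_pow, mul_pow, mul_pow, hs, ht]
      linear_combination (n : ℝ) ^ 2 * hc
    have ha : (0 : ℝ) ≤ a := by positivity
    have hb : (0 : ℝ) ≤ b := by positivity
    constructor
    · have : (a : ℝ) ^ 2 + (b : ℝ) ^ 2 < (n : ℝ) ^ 2 := by nlinarith
      exact_mod_cast this
    · have : (n : ℝ) ^ 2 < ((a : ℝ) + 1) ^ 2 + ((b : ℝ) + 1) ^ 2 := by nlinarith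
      exact_mod_cast this
  · rintro ⟨h1, h2⟩
    have h1' : (a : ℝ) ^ 2 + (b : ℝ) ^ 2 < (n : ℝ) ^ 2 := by exact_mod_cast h1
    have h2' : (n : ℝ) ^ 2 < ((a : ℝ) + 1) ^ 2 + ((b : ℝ) + 1) ^ 2 := by exact_mod_cast h2
    have hcont : ContinuousOn (fun u : ℝ => ((a : ℝ) + u) ^ 2 + ((b : ℝ) + u) ^ 2) (Icc 0 1) := by
      fun_prop
    obtain ⟨u, ⟨hu0, hu1⟩, hu⟩ := intermediate_value_Ioo (by norm_num) hcont
      (show (n : ℝ) ^ 2 ∈ _ by simpa using ⟨h1', h2'⟩)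
    simp only at hu
    have e1 : sg s * (sg s * (a + u) / n) * n = a + u := by
      field_simp
      linear_combination hs
    have e2 : sg t * (sg t * (b + u) / n) * n = b + u := by
      field_simp
      linear_combination ht
    obtain ⟨h5, h6⟩ := (sgnIdx_Ioo n hn s a (sg s * (a + u) / n)).2
      (by rw [e1]; constructor <;> linarith)
    obtain ⟨h7, h8⟩ := (sgnIdx_Ioo n hn t b (sg t * (b + u) / n)).2
      (by rw [e2]; constructor <;> linarith)
    refine ⟨(sg s * (a + u) / n, sg t * (b + u) / n), ⟨h5, h6, h7, h8⟩, ?_⟩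
    simp only [unitCircle, mem_ofPred_eq]
    rw [div_pow, div_pow, mul_pow, mul_pow, hs, ht, ← add_div, one_mul, one_mul, hu]
    field_simp

lemma ncard_approx (n : ℕ) (hn : 1 ≤ n) :
    (approx n unitCircle).ncard = 4 * (quadBoxes n).card := by
  classical
  let g : (Bool × Bool) × (ℕ × ℕ) → ℤ × ℤ :=
    fun q => (sgnIdx q.1.1 q.2.1, sgnIdx q.1.2 q.2.2)
  have hg : Function.Injective g := by
    rintro ⟨⟨s, t⟩, a, b⟩ ⟨⟨s', t'⟩, a', b'⟩ h
    simp only [g, Prod.mk.injEq] at h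
    obtain ⟨h1, h2⟩ := sgnIdx_inj h.1
    obtain ⟨h3, h4⟩ := sgnIdx_inj h.2
    simp [*]
  have : approx n unitCircle =
      (((Finset.univ ×ˢ quadBoxes n).image g : Finset (ℤ × ℤ)) : Set (ℤ × ℤ)) := by
    ext ⟨i, j⟩
    obtain ⟨s, a, rfl⟩ := exists_sgnIdx i
    obtain ⟨t, b, rfl⟩ := exists_sgnIdx j
    rw [mem_approx n hn, Finset.mem_coe,
      show (sgnIdx s a, sgnIdx t b) = g ((s, t), (a, b)) from rfl, hg.mem_finset_image]
    simp only [quadBoxes, Finset.mem_product, Finset.mem_univ, true_and, Finset.mem_filter,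
      Finset.mem_range]
    constructor
    · intro h
      exact ⟨⟨by nlinarith, by nlinarith⟩, h⟩
    · exact fun h => h.2
  rw [this, Set.ncard_coe_finset, Finset.card_image_of_injective _ hg, Finset.card_product]
  simp

lemma quadPts_le {n : ℕ} {k : ℝ} (h : DivBd ((n : GaussianInt) * n) k) :
    ((quadPts n).card : ℝ) ≤ k := by
  classical
  obtain ⟨S, h1, h2⟩ := h
  refine le_trans ?_ h2
  norm_cast
  refine Finset.card_le_card_of_injOn
    (fun q => (⟨(q.1 : ℤ) + 1, (q.2 : ℤ) + 1⟩ : GaussianInt)) ?_ ?_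
  · rintro ⟨a, b⟩ hq
    simp only [quadPts, Finset.coe_filter, mem_ofPred_eq] at hq
    apply h1
    refine ⟨star (⟨(a : ℤ) + 1, (b : ℤ) + 1⟩ : GaussianInt), ?_⟩
    rw [← Zsqrtd.norm_eq_mul_conj, Zsqrtd.norm_def]
    have : ((n : ℤ) * n) = ((a : ℤ) + 1) * (a + 1) - -1 * (b + 1) * (b + 1) := by
      have := hq.2
      zify at this
      linarith
    simp only
    rw [← this]
    push_cast
    rfl
  · rintro ⟨a, b⟩ _ ⟨c, d⟩ _ h
    simpa [Zsqrtd.ext_iff] using h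

theorem sq_card_approx_unitCircle (ε : ℝ) (hε : 0 < ε) :
    ∃ K : ℝ, ∀ n : ℕ, 1 ≤ n →
      |((approx n unitCircle).ncard : ℝ) ^ 2 - 64 * (n : ℝ) ^ 2| ≤ K * (n : ℝ) ^ (1 + ε) := by
  obtain ⟨K, hK0, hK⟩ := divBd_nat (ε / 2) (by positivity)
  refine ⟨64 * (K * K + 1), fun n hn => ?_⟩
  have hn1 : (1 : ℝ) ≤ n := by exact_mod_cast hn
  have hP := quadPts_le ((hK n hn).mul (hK n hn))
  have e1 : K * (n : ℝ) ^ (ε / 2) * (K * (n : ℝ) ^ (ε / 2)) = K * K * (n : ℝ) ^ ε := by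
    rw [show ε = ε / 2 + ε / 2 by ring, Real.rpow_add (by linarith)]
    ring_nf
  rw [e1] at hP
  have hone : 1 ≤ (n : ℝ) ^ ε := Real.one_le_rpow hn1 hε.le
  have hq : (((quadBoxes n).card : ℝ)) + (quadPts n).card + 1 = 2 * n := by
    exact_mod_cast quad_count n hn
  rw [ncard_approx n hn, Real.rpow_add (by linarith), Real.rpow_one]
  push_cast
  set Q : ℝ := ((quadBoxes n).card : ℝ) with hQ
  set P : ℝ := ((quadPts n).card : ℝ) with hPdef
  have hQ0 : 0 ≤ Q := by positivity
  have hP0 : 0 ≤ P := by positivity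
  have hP1 : P + 1 ≤ (K * K + 1) * (n : ℝ) ^ ε := by linarith
  have e2 : (4 * Q) ^ 2 - 64 * (n : ℝ) ^ 2 = -(16 * (P + 1) * (2 * n + Q)) := by
    rw [show Q = 2 * n - P - 1 by linarith]
    ring
  rw [e2, abs_neg, abs_of_nonneg (by positivity)]
  calc 16 * (P + 1) * (2 * n + Q) ≤ 16 * (P + 1) * (4 * n) := by gcongr; linarith
    _ = 64 * n * (P + 1) := by ring
    _ ≤ 64 * n * ((K * K + 1) * (n : ℝ) ^ ε) := by gcongr
    _ = _ := by ring
end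

section
/- The limit lim_{n→∞} |Ch(n)| / |C(n)|² exists and equals (1 + √3)/8 − π(2 − √3)/96. -/
open Real Set Filter

/-- `Ch(n)`: ordered pairs of boxes of `C(n)` containing interior points at
Euclidean distance greater than `√3`. -/
def longChords (n : ℕ) : Set ((ℤ × ℤ) × (ℤ × ℤ)) :=
  {q | q.1 ∈ approx n unitCircle ∧ q.2 ∈ approx n unitCircle ∧
    ∃ a ∈ boxInt n q.1.1 q.1.2, ∃ b ∈ boxInt n q.2.1 q.2.2,
      Real.sqrt ((a.1 - b.1) ^ 2 + (a.2 - b.2) ^ 2) > Real.sqrt 3}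

open MeasureTheory

/-- Diagonals through lattice points of the circle of radius `n` (first quadrant). -/
def latDiag (n : ℕ) : Set ℤ :=
  {d | ∃ a b : ℤ, 0 ≤ a ∧ 0 ≤ b ∧ a ^ 2 + b ^ 2 = (n : ℤ) ^ 2 ∧ b - a = d}

lemma latDiag_bounds {n : ℕ} {d : ℤ} (h : d ∈ latDiag n) : -(n : ℤ) ≤ d ∧ d ≤ n := by
  obtain ⟨a, b, ha, hb, h, rfl⟩ := h
  have h1 : a ≤ n := by nlinarith
  have h2 : b ≤ n := by nlinarith
  constructor <;> linarith

lemma latDiag_subset (n : ℕ) : latDiag n ⊆ (Finset.Icc (-(n : ℤ)) n : Finset ℤ) := by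
  intro d hd
  simpa using latDiag_bounds hd

lemma latDiag_finite (n : ℕ) : (latDiag n).Finite :=
  (Finset.finite_toSet _).subset (latDiag_subset n)

lemma latDiag_step {n : ℕ} {a b a' b' : ℤ} (ha : 0 ≤ a) (hb : 0 ≤ b) (ha' : 0 ≤ a')
    (hb' : 0 ≤ b') (h : a ^ 2 + b ^ 2 = (n : ℤ) ^ 2) (h' : a' ^ 2 + b' ^ 2 = (n : ℤ) ^ 2)
    (hlt : b - a < b' - a') : a' ≤ a ∧ b ≤ b' := by
  constructor
  · by_contra hc
    push Not at hc
    have : b < b' := by linarith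
    nlinarith
  · by_contra hc
    push Not at hc
    have : a' < a := by linarith
    nlinarith

lemma latDiag_inj {p q a b a2 b2 : ℤ} {N : ℤ} (ha : 0 ≤ a) (hb : 0 ≤ b) (ha2 : 0 ≤ a2)
    (hb2 : 0 ≤ b2) (hp : 0 ≤ p) (hq : 0 ≤ q) (hpq : 0 < p + q)
    (h : a ^ 2 + b ^ 2 = N) (h2 : a2 ^ 2 + b2 ^ 2 = N)
    (h' : (a - p) ^ 2 + (b + q) ^ 2 = N) (h2' : (a2 - p) ^ 2 + (b2 + q) ^ 2 = N) :
    a = a2 ∧ b = b2 := by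
  have key : p * (a - a2) = q * (b - b2) := by linarith
  have aux : ∀ a b a2 b2 : ℤ, 0 ≤ a → 0 ≤ b → 0 ≤ a2 → 0 ≤ b2 → a ^ 2 + b ^ 2 = N →
      a2 ^ 2 + b2 ^ 2 = N → p * (a - a2) = q * (b - b2) → ¬ a2 < a := by
    intro a b a2 b2 ha hb ha2 hb2 h h2 key hlt
    have hb3 : b < b2 := by
      by_contra hc
      push Not at hc
      nlinarith
    have h1 : 0 ≤ p * (a - a2) := mul_nonneg hp (by linarith)
    have h3 : q * (b - b2) ≤ 0 := mul_nonpos_of_nonneg_of_nonpos hq (by linarith)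
    have h4 : p * (a - a2) = 0 := by linarith
    have h5 : q * (b - b2) = 0 := by linarith
    rcases mul_eq_zero.1 h4 with h6 | h6
    · rcases mul_eq_zero.1 h5 with h7 | h7 <;> linarith
    · linarith
  have e1 := aux a b a2 b2 ha hb ha2 hb2 h h2 key
  have e2 := aux a2 b2 a b ha2 hb2 ha hb h2 h (by linarith)
  have e3 : a = a2 := by omega
  subst e3
  refine ⟨rfl, ?_⟩
  have : b ^ 2 = b2 ^ 2 := by linarith
  exact (sq_eq_sq₀ hb hb2).1 this

lemma latDiag_card (n K : ℕ) (hK : 0 < K) :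
    (latDiag n).ncard ≤ (2 * n / K + 3) + (K + 1) ^ 2 := by
  classical
  set M2 : Set ℤ := {d | d ∈ latDiag n ∧ ∃ d' ∈ latDiag n, d < d' ∧ d' ≤ d + K} with hM2
  set M1 : Set ℤ := latDiag n \ M2 with hM1
  have hsub : latDiag n ⊆ M1 ∪ M2 := by
    intro d hd
    by_cases h : d ∈ M2
    · exact Or.inr h
    · exact Or.inl ⟨hd, h⟩
  have hM1f : M1.Finite := (latDiag_finite n).subset sdiff_subset
  have hM2f : M2.Finite := (latDiag_finite n).subset (fun d h => h.1)
  have hc1 : M1.ncard ≤ 2 * n / K + 3 := by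
    have h1 : M1.ncard ≤ ((Finset.Icc (-(n : ℤ) / K) (n / K) : Finset ℤ) : Set ℤ).ncard := by
      apply Set.ncard_le_ncard_of_injOn (fun d => d / (K : ℤ))
      · intro d hd
        have := latDiag_bounds hd.1
        simp only [Finset.coe_Icc, Set.mem_Icc]
        have hK' : (0 : ℤ) < K := by exact_mod_cast hK
        exact ⟨Int.ediv_le_ediv hK' this.1, Int.ediv_le_ediv hK' this.2⟩
      · have aux : ∀ d ∈ M1, ∀ d' ∈ M1, d / (K : ℤ) = d' / (K : ℤ) → ¬ d < d' := by
          intro d hd d' hd' he hlt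
          apply hd.2
          refine ⟨hd.1, d', hd'.1, hlt, ?_⟩
          have hK' : (0 : ℤ) < K := by exact_mod_cast hK
          have e1 := Int.mul_ediv_add_emod d K
          have e2 := Int.mul_ediv_add_emod d' K
          have e3 := Int.emod_nonneg d hK'.ne'
          have e4 := Int.emod_lt_of_pos d' hK'
          rw [he] at e1
          linarith
        intro d hd d' hd' he
        have := aux d hd d' hd' he
        have := aux d' hd' d hd he.symm
        omega
    rw [Set.ncard_coe_finset, Int.card_Icc] at h1
    refine h1.trans ?_
    have hK' : (0 : ℤ) < K := by exact_mod_cast hK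
    have e1 : (n : ℤ) / K + (n : ℤ) / K ≤ (2 * n : ℤ) / K := by
      rw [Int.le_ediv_iff_mul_le hK']
      have := Int.ediv_mul_le (n : ℤ) hK'.ne'
      linarith
    have e2 : -((n : ℤ) / K) - 1 ≤ (-(n : ℤ)) / K := by
      rw [Int.le_ediv_iff_mul_le hK']
      have := Int.mul_ediv_add_emod (n : ℤ) K
      have := Int.emod_lt_of_pos (n : ℤ) hK'
      nlinarith
    have e3 : ((2 * n / K : ℕ) : ℤ) = (2 * n : ℤ) / K := by push_cast; rfl
    have e4 : 0 ≤ (2 * n : ℤ) / K := by positivity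
    omega
  have hc2 : M2.ncard ≤ (K + 1) ^ 2 := by
    have hex : ∀ d ∈ M2, ∃ pq : ℤ × ℤ, 0 ≤ pq.1 ∧ 0 ≤ pq.2 ∧ 0 < pq.1 + pq.2 ∧
        pq.1 + pq.2 ≤ K ∧ ∃ a b : ℤ, 0 ≤ a ∧ 0 ≤ b ∧ a ^ 2 + b ^ 2 = (n : ℤ) ^ 2 ∧ b - a = d ∧
          (a - pq.1) ^ 2 + (b + pq.2) ^ 2 = (n : ℤ) ^ 2 := by
      rintro d ⟨⟨a, b, ha, hb, h, hd⟩, d', ⟨a', b', ha', hb', h', hd'⟩, hlt, hle⟩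
      have := latDiag_step ha hb ha' hb' h h' (by linarith)
      refine ⟨(a - a', b' - b), ?_, ?_, ?_, ?_, a, b, ha, hb, h, hd, ?_⟩
      · simp only; linarith
      · simp only; linarith
      · simp only; linarith
      · simp only; linarith
      · simp only
        rw [← h']; ring
    choose! f hf using hex
    have h1 : M2.ncard ≤
        ((Finset.Icc (0 : ℤ) K ×ˢ Finset.Icc (0 : ℤ) K : Finset (ℤ × ℤ)) : Set (ℤ × ℤ)).ncard := by
      apply Set.ncard_le_ncard_of_injOn f
      · intro d hd
        obtain ⟨h1, h2, h3, h4, -⟩ := hf d hd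
        simp only [Finset.coe_product, Set.mem_prod, Finset.coe_Icc, Set.mem_Icc]
        refine ⟨⟨h1, by linarith⟩, h2, by linarith⟩
      · intro d hd d2 hd2 he
        obtain ⟨h1, h2, h3, h4, a, b, ha, hb, h5, h6, h7⟩ := hf d hd
        obtain ⟨-, -, -, -, a2, b2, ha2, hb2, h52, h62, h72⟩ := hf d2 hd2
        rw [← he] at h72
        have := latDiag_inj ha hb ha2 hb2 h1 h2 h3 h5 h52 h7 h72
        rw [← h6, ← h62, this.1, this.2]
    rw [Set.ncard_coe_finset] at h1
    simpa [sq] using h1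
  calc (latDiag n).ncard ≤ (M1 ∪ M2).ncard := Set.ncard_le_ncard hsub (hM1f.union hM2f)
    _ ≤ M1.ncard + M2.ncard := Set.ncard_union_le _ _
    _ ≤ _ := by linarith

lemma latDiag_tendsto :
    Tendsto (fun n : ℕ => ((latDiag n).ncard : ℝ) / n) atTop (nhds 0) := by
  rw [Metric.tendsto_atTop]
  intro ε hε
  obtain ⟨K, hK⟩ := exists_nat_gt (4 / ε)
  have hK0 : (0 : ℝ) < K := lt_trans (by positivity) hK
  have hKn : 0 < K := by exact_mod_cast hK0
  obtain ⟨N, hN⟩ := exists_nat_gt ((3 + (K + 1) ^ 2) * 2 / ε)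
  refine ⟨N + 1, fun n hn => ?_⟩
  have hn' : (N : ℝ) + 1 ≤ n := by exact_mod_cast hn
  have hn0 : (0 : ℝ) < n := lt_of_lt_of_le (by positivity) hn'
  rw [Real.dist_eq, sub_zero, abs_of_nonneg (by positivity), div_lt_iff₀ hn0]
  have h1 : ((latDiag n).ncard : ℝ) ≤ (2 * n / K + 3) + (K + 1) ^ 2 := by
    have : ((latDiag n).ncard : ℝ) ≤ (((2 * n / K + 3) + (K + 1) ^ 2 : ℕ) : ℝ) := by
      exact_mod_cast latDiag_card n K hKn
    refine this.trans ?_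
    push_cast
    have : ((2 * n / K : ℕ) : ℝ) ≤ 2 * n / K := by
      have := @Nat.cast_div_le ℝ _ _ _ (2 * n) K
      push_cast at this
      exact this
    linarith
  have h2 : (2 * n / K : ℝ) < ε / 2 * n := by
    rw [div_lt_iff₀ hK0]
    rw [div_lt_iff₀ hε] at hK
    nlinarith
  have h3 : (3 + (K + 1) ^ 2 : ℝ) < ε / 2 * n := by
    rw [div_lt_iff₀ hε] at hN
    nlinarith
  linarith

lemma riemann_tendsto (G : ℝ → ℝ) (hG : Continuous G) :
    Tendsto (fun n : ℕ => (∑ d ∈ Finset.Ico (-(n : ℤ)) n, G ((d : ℝ) / n)) / n) atTop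
      (nhds (∫ u in (-1 : ℝ)..1, G u)) := by
  rw [Metric.tendsto_atTop]
  intro ε hε
  have huc : UniformContinuousOn G (Icc (-1 : ℝ) 1) :=
    isCompact_Icc.uniformContinuousOn_of_continuous hG.continuousOn
  rw [Metric.uniformContinuousOn_iff] at huc
  obtain ⟨δ, hδ, hu⟩ := huc (ε / 4) (by positivity)
  obtain ⟨N, hN⟩ := exists_nat_gt (1 / δ)
  refine ⟨N + 1, fun n hn => ?_⟩
  have hn' : (N : ℝ) + 1 ≤ n := by exact_mod_cast hn
  have hn0 : (0 : ℝ) < n := lt_of_lt_of_le (by positivity) hn'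
  have hnδ : 1 / (n : ℝ) < δ := by
    rw [div_lt_iff₀ hδ] at hN
    rw [div_lt_iff₀ hn0]
    nlinarith
  have hsum : (∑ d ∈ Finset.Ico (-(n : ℤ)) n, G ((d : ℝ) / n)) / n
      = ∑ k ∈ Finset.range (2 * n), G (-1 + k / n) / n := by
    rw [Finset.sum_div]
    symm
    apply Finset.sum_bij (fun (k : ℕ) _ => (k : ℤ) - n)
    · intro k hk
      simp only [Finset.mem_range] at hk
      simp only [Finset.mem_Ico]
      omega
    · intro a _ b _ h
      omega
    · intro d hd
      simp only [Finset.mem_Ico] at hd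
      refine ⟨(d + n).toNat, ?_, ?_⟩
      · simp only [Finset.mem_range]; omega
      · omega
    · intro k hk
      congr 2
      push_cast
      field_simp
      ring
  have hsplit : (∫ u in (-1 : ℝ)..1, G u)
      = ∑ k ∈ Finset.range (2 * n), ∫ u in (-1 + (k : ℝ) / n)..(-1 + ((k + 1 : ℕ) : ℝ) / n), G u := by
    rw [intervalIntegral.sum_integral_adjacent_intervals (a := fun k : ℕ => -1 + (k : ℝ) / n)
      (fun k _ => hG.intervalIntegrable _ _)]
    congr 1
    · simp
    · push_cast
      field_simp
      ring
  rw [hsum, hsplit, Real.dist_eq, ← Finset.sum_sub_distrib]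
  have hterm : ∀ k ∈ Finset.range (2 * n), |G (-1 + k / n) / n -
      ∫ u in (-1 + (k : ℝ) / n)..(-1 + ((k + 1 : ℕ) : ℝ) / n), G u| ≤ ε / 4 * (1 / n) := by
    intro k hk
    have hk' : (k : ℝ) + 1 ≤ 2 * n := by
      have : k + 1 ≤ 2 * n := by simpa using hk
      exact_mod_cast this
    have hlen : (-1 + ((k + 1 : ℕ) : ℝ) / n) - (-1 + (k : ℝ) / n) = 1 / n := by
      push_cast; ring
    have hle : (-1 + (k : ℝ) / n) ≤ (-1 + ((k + 1 : ℕ) : ℝ) / n) := by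
      have : 0 < 1 / (n : ℝ) := by positivity
      linarith
    have e1 : G (-1 + k / n) / n =
        ∫ u in (-1 + (k : ℝ) / n)..(-1 + ((k + 1 : ℕ) : ℝ) / n), G (-1 + k / n) := by
      rw [intervalIntegral.integral_const, hlen, smul_eq_mul]; ring
    rw [e1, ← intervalIntegral.integral_sub (by simp) (hG.intervalIntegrable _ _)]
    have := intervalIntegral.norm_integral_le_of_norm_le_const (C := ε / 4)
      (f := fun u => G (-1 + k / n) - G u)
      (a := (-1 + (k : ℝ) / n)) (b := (-1 + ((k + 1 : ℕ) : ℝ) / n)) (by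
        intro u hu'
        rw [uIoc_of_le hle] at hu'
        have h0 : 0 ≤ (k : ℝ) / n := by positivity
        have h2 : -1 + ((k + 1 : ℕ) : ℝ) / n ≤ 1 := by
          push_cast
          have : ((k : ℝ) + 1) / n ≤ 2 := by rw [div_le_iff₀ hn0]; exact hk'
          linarith
        rw [Real.norm_eq_abs, ← Real.dist_eq]
        apply (hu _ _ _ _ _).le
        · constructor <;> linarith
        · constructor <;> linarith [hu'.1, hu'.2]
        · rw [Real.dist_eq, abs_lt]
          constructor <;> linarith [hu'.1, hu'.2])
    rw [hlen, abs_of_pos (by positivity : 0 < 1 / (n : ℝ))] at this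
    exact this
  calc _ ≤ ∑ k ∈ Finset.range (2 * n), ε / 4 * (1 / n) :=
        (Finset.abs_sum_le_sum_abs _ _).trans (Finset.sum_le_sum hterm)
    _ = ε / 2 := by
        rw [Finset.sum_const, Finset.card_range, nsmul_eq_mul]
        push_cast
        field_simp
        ring
    _ < ε := by linarith

/-- Centre of the box. -/
noncomputable def ctr (n : ℕ) (B : ℤ × ℤ) : ℝ × ℝ :=
  (((B.1 : ℝ) + 1 / 2) / n, ((B.2 : ℝ) + 1 / 2) / n)

lemma ctr_mem {n : ℕ} (hn : 0 < n) (B : ℤ × ℤ) : ctr n B ∈ boxInt n B.1 B.2 := by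
  have hn0 : (0 : ℝ) < n := by exact_mod_cast hn
  simp only [ctr, boxInt, Set.mem_ofPred_eq]
  refine ⟨?_, ?_, ?_, ?_⟩ <;> apply div_lt_div_of_pos_right _ hn0 <;> linarith

lemma box_close {n : ℕ} {i j : ℤ} {p q : ℝ × ℝ} (hp : p ∈ boxInt n i j)
    (hq : q ∈ boxInt n i j) : |p.1 - q.1| ≤ 1 / n ∧ |p.2 - q.2| ≤ 1 / n := by
  obtain ⟨h1, h2, h3, h4⟩ := hp
  obtain ⟨g1, g2, g3, g4⟩ := hq
  have e1 : ((i : ℝ) + 1) / n = i / n + 1 / n := by ring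
  have e2 : ((j : ℝ) + 1) / n = j / n + 1 / n := by ring
  constructor <;> rw [abs_le] <;> constructor <;> linarith

lemma circle_bound {p : ℝ × ℝ} (hp : p ∈ unitCircle) :
    (-1 ≤ p.1 ∧ p.1 ≤ 1) ∧ (-1 ≤ p.2 ∧ p.2 ≤ 1) := by
  have : p.1 ^ 2 + p.2 ^ 2 = 1 := hp
  refine ⟨⟨?_, ?_⟩, ?_, ?_⟩ <;> nlinarith [sq_nonneg p.1, sq_nonneg p.2]

lemma approx_bound {n : ℕ} (hn : 0 < n) {B : ℤ × ℤ} (hB : B ∈ approx n unitCircle) :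
    (-(n : ℤ) ≤ B.1 ∧ B.1 < n) ∧ (-(n : ℤ) ≤ B.2 ∧ B.2 < n) := by
  have hn0 : (0 : ℝ) < n := by exact_mod_cast hn
  obtain ⟨p, ⟨h1, h2, h3, h4⟩, hp⟩ := hB
  obtain ⟨⟨g1, g2⟩, g3, g4⟩ := circle_bound hp
  rw [div_lt_iff₀ hn0] at h1 h3
  rw [lt_div_iff₀ hn0] at h2 h4
  have k1 : (-(n : ℤ) : ℝ) < B.1 + 1 := by push_cast; nlinarith
  have k2 : (B.1 : ℝ) < (n : ℤ) := by push_cast; nlinarith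
  have k3 : (-(n : ℤ) : ℝ) < B.2 + 1 := by push_cast; nlinarith
  have k4 : (B.2 : ℝ) < (n : ℤ) := by push_cast; nlinarith
  norm_cast at k1 k2 k3 k4
  omega

lemma approx_finite {n : ℕ} (hn : 0 < n) : (approx n unitCircle).Finite := by
  apply (Finset.finite_toSet (Finset.Ico (-(n : ℤ)) n ×ˢ Finset.Ico (-(n : ℤ)) n)).subset
  intro B hB
  have := approx_bound hn hB
  simp only [Finset.coe_product, Set.mem_prod, Finset.coe_Ico, Set.mem_Ico]
  exact this

open Classical in
/-- The finset of boxes meeting the circle. -/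
noncomputable def boxes (n : ℕ) : Finset (ℤ × ℤ) :=
  if h : 0 < n then (approx_finite h).toFinset else ∅

lemma mem_boxes {n : ℕ} (hn : 0 < n) {B : ℤ × ℤ} :
    B ∈ boxes n ↔ B ∈ approx n unitCircle := by
  simp [boxes, hn]

lemma refl1 {n : ℕ} {i j : ℤ} (h : (i, j) ∈ approx n unitCircle) :
    (-1 - i, j) ∈ approx n unitCircle := by
  obtain ⟨p, ⟨h1, h2, h3, h4⟩, hp⟩ := h
  refine ⟨(-p.1, p.2), ⟨?_, ?_, h3, h4⟩, ?_⟩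
  · have : (((-1 - i : ℤ) : ℝ)) / n = -(((i : ℝ) + 1) / n) := by push_cast; ring
    simp only [this]; simp only at h2; linarith
  · have : (((-1 - i : ℤ) : ℝ) + 1) / n = -((i : ℝ) / n) := by push_cast; ring
    simp only [this]; simp only at h1; linarith
  · simpa [unitCircle] using hp

lemma refl2 {n : ℕ} {i j : ℤ} (h : (i, j) ∈ approx n unitCircle) :
    (i, -1 - j) ∈ approx n unitCircle := by
  obtain ⟨p, ⟨h1, h2, h3, h4⟩, hp⟩ := h
  refine ⟨(p.1, -p.2), ⟨h1, h2, ?_, ?_⟩, ?_⟩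
  · have : (((-1 - j : ℤ) : ℝ)) / n = -(((j : ℝ) + 1) / n) := by push_cast; ring
    simp only [this]; simp only at h4; linarith
  · have : (((-1 - j : ℤ) : ℝ) + 1) / n = -((j : ℝ) / n) := by push_cast; ring
    simp only [this]; simp only at h3; linarith
  · simpa [unitCircle] using hp

/-- Boxes in the first quadrant. -/
noncomputable def boxesQ (n : ℕ) : Finset (ℤ × ℤ) :=
  (boxes n).filter (fun B => 0 ≤ B.1 ∧ 0 ≤ B.2)

lemma sum_boxes {n : ℕ} (hn : 0 < n) (f : ℤ × ℤ → ℝ) :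
    ∑ B ∈ boxes n, f B = ∑ B ∈ boxesQ n,
      (f B + f (-1 - B.1, B.2) + f (-1 - B.1, -1 - B.2) + f (B.1, -1 - B.2)) := by
  have s1 : ∑ B ∈ boxes n, f B
      = ∑ B ∈ (boxes n).filter (fun B => 0 ≤ B.1), (f B + f (-1 - B.1, B.2)) := by
    rw [← Finset.sum_filter_add_sum_filter_not (boxes n) (fun B => 0 ≤ B.1),
      Finset.sum_add_distrib]
    congr 1
    refine Finset.sum_bij' (fun B _ => (-1 - B.1, B.2)) (fun B _ => (-1 - B.1, B.2)) ?_ ?_ ?_ ?_ ?_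
    · rintro ⟨i, j⟩ h
      simp only [Finset.mem_filter, mem_boxes hn] at h ⊢
      exact ⟨refl1 h.1, by omega⟩
    · rintro ⟨i, j⟩ h
      simp only [Finset.mem_filter, mem_boxes hn] at h ⊢
      exact ⟨refl1 h.1, by omega⟩
    · rintro ⟨i, j⟩ h; simp
    · rintro ⟨i, j⟩ h; simp
    · rintro ⟨i, j⟩ h; simp
  have s2 : ∀ g : ℤ × ℤ → ℝ, ∑ B ∈ (boxes n).filter (fun B => 0 ≤ B.1), g B
      = ∑ B ∈ boxesQ n, (g B + g (B.1, -1 - B.2)) := by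
    intro g
    rw [← Finset.sum_filter_add_sum_filter_not _ (fun B : ℤ × ℤ => 0 ≤ B.2),
      Finset.sum_add_distrib, Finset.filter_filter, Finset.filter_filter]
    congr 1
    refine Finset.sum_bij' (fun B _ => (B.1, -1 - B.2)) (fun B _ => (B.1, -1 - B.2)) ?_ ?_ ?_ ?_ ?_
    · rintro ⟨i, j⟩ h
      simp only [boxesQ, Finset.mem_filter, mem_boxes hn] at h ⊢
      exact ⟨refl2 h.1, by omega⟩
    · rintro ⟨i, j⟩ h
      simp only [boxesQ, Finset.mem_filter, mem_boxes hn] at h ⊢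
      exact ⟨refl2 h.1, by omega⟩
    · rintro ⟨i, j⟩ h; simp
    · rintro ⟨i, j⟩ h; simp
    · rintro ⟨i, j⟩ h; simp
  rw [s1, s2]
  apply Finset.sum_congr rfl
  intro B _
  ring

/-- The quarter circle parametrised by `u = y - x`. -/
noncomputable def gam (u : ℝ) : ℝ × ℝ := ((√(2 - u ^ 2) - u) / 2, (√(2 - u ^ 2) + u) / 2)

lemma gam_cont : Continuous gam := by
  unfold gam
  fun_prop

lemma gam_circle {p : ℝ × ℝ} (hp : p ∈ unitCircle) (h1 : 0 ≤ p.1) (h2 : 0 ≤ p.2) :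
    gam (p.2 - p.1) = p := by
  have h : p.1 ^ 2 + p.2 ^ 2 = 1 := hp
  have e : 2 - (p.2 - p.1) ^ 2 = (p.1 + p.2) ^ 2 := by linarith
  unfold gam
  rw [e, Real.sqrt_sq (by linarith)]
  ext <;> simp only <;> ring

lemma gam_props {u : ℝ} (h1 : -1 ≤ u) (h2 : u ≤ 1) :
    gam u ∈ unitCircle ∧ 0 ≤ (gam u).1 ∧ 0 ≤ (gam u).2 ∧ (gam u).2 - (gam u).1 = u := by
  have hu : u ^ 2 ≤ 1 := by nlinarith
  have hs : √(2 - u ^ 2) ^ 2 = 2 - u ^ 2 := Real.sq_sqrt (by linarith)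
  have h3 : 1 ≤ √(2 - u ^ 2) := by
    rw [Real.one_le_sqrt]; linarith
  refine ⟨?_, ?_, ?_, ?_⟩
  · simp only [unitCircle, gam, Set.mem_ofPred_eq]; nlinarith
  · simp only [gam]; linarith
  · simp only [gam]; linarith
  · simp only [gam]; ring

lemma memQ {n : ℕ} (hn : 0 < n) {B : ℤ × ℤ} :
    B ∈ boxesQ n ↔ B ∈ approx n unitCircle ∧ 0 ≤ B.1 ∧ 0 ≤ B.2 := by
  simp only [boxesQ, Finset.mem_filter, mem_boxes hn]

lemma diag_inj_aux {n : ℕ} (hn : 0 < n) {i j i' j' : ℤ} (hi : 0 ≤ i) (hj : 0 ≤ j)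
    (h : (i, j) ∈ approx n unitCircle) (h' : (i', j') ∈ approx n unitCircle)
    (hii : i < i') (hjj : j < j') : False := by
  have hn0 : (0 : ℝ) < n := by exact_mod_cast hn
  obtain ⟨p, ⟨h1, h2, h3, h4⟩, hp⟩ := h
  obtain ⟨q, ⟨g1, g2, g3, g4⟩, hq⟩ := h'
  have hp' : p.1 ^ 2 + p.2 ^ 2 = 1 := hp
  have hq' : q.1 ^ 2 + q.2 ^ 2 = 1 := hq
  simp only at h1 h2 h3 h4 g1 g2 g3 g4
  have k1 : ((i : ℝ) + 1) / n ≤ i' / n := by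
    apply div_le_div_of_nonneg_right _ hn0.le
    exact_mod_cast hii
  have k2 : ((j : ℝ) + 1) / n ≤ j' / n := by
    apply div_le_div_of_nonneg_right _ hn0.le
    exact_mod_cast hjj
  have k3 : 0 ≤ (i : ℝ) / n := by
    have : (0 : ℝ) ≤ i := by exact_mod_cast hi
    positivity
  have k4 : 0 ≤ (j : ℝ) / n := by
    have : (0 : ℝ) ≤ j := by exact_mod_cast hj
    positivity
  nlinarith

lemma diag_inj {n : ℕ} (hn : 0 < n) :
    Set.InjOn (fun B : ℤ × ℤ => B.2 - B.1) (boxesQ n : Set (ℤ × ℤ)) := by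
  rintro ⟨i, j⟩ h ⟨i', j'⟩ h' he
  rw [Finset.mem_coe, memQ hn] at h h'
  simp only at he h h'
  rcases lt_trichotomy i i' with hl | hl | hl
  · exact (diag_inj_aux hn h.2.1 h.2.2 h.1 h'.1 hl (by omega)).elim
  · subst hl
    have : j = j' := by omega
    rw [this]
  · exact (diag_inj_aux hn h'.2.1 h'.2.2 h'.1 h.1 hl (by omega)).elim

lemma diag_range {n : ℕ} (hn : 0 < n) :
    (boxesQ n).image (fun B : ℤ × ℤ => B.2 - B.1) ⊆ Finset.Ico (-(n : ℤ)) n := by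
  intro d hd
  rw [Finset.mem_image] at hd
  obtain ⟨B, hB, rfl⟩ := hd
  rw [memQ hn] at hB
  have := approx_bound hn hB.1
  rw [Finset.mem_Ico]
  omega

lemma diag_missing {n : ℕ} (hn : 0 < n) :
    ((Finset.Ico (-(n : ℤ)) n \ (boxesQ n).image (fun B : ℤ × ℤ => B.2 - B.1) : Finset ℤ) : Set ℤ)
      ⊆ latDiag n := by
  have hn0 : (0 : ℝ) < n := by exact_mod_cast hn
  intro d hd
  simp only [Finset.coe_sdiff, Set.mem_sdiff, Finset.mem_coe, Finset.mem_Ico] at hd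
  obtain ⟨⟨h1, h2⟩, h3⟩ := hd
  have h1' : (-n : ℝ) ≤ d := by exact_mod_cast h1
  have h2' : (d : ℝ) ≤ n := by exact_mod_cast h2.le
  obtain ⟨hc, hx, hy, hu⟩ := gam_props (u := (d : ℝ) / n)
    (by rw [le_div_iff₀ hn0]; linarith) (by rw [div_le_iff₀ hn0]; linarith)
  set p := gam ((d : ℝ) / n) with hp
  have hyx : n * p.2 = n * p.1 + d := by
    field_simp at hu
    linarith
  have hi0 : 0 ≤ ⌊n * p.1⌋ := Int.floor_nonneg.2 (by positivity)
  by_cases hfr : (⌊n * p.1⌋ : ℝ) = n * p.1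
  · refine ⟨⌊n * p.1⌋, ⌊n * p.1⌋ + d, hi0, ?_, ?_, by ring⟩
    · have : (0 : ℝ) ≤ ((⌊n * p.1⌋ + d : ℤ) : ℝ) := by
        push_cast
        rw [hfr, ← hyx]; positivity
      exact_mod_cast this
    · have : ((⌊n * p.1⌋ : ℤ) : ℝ) ^ 2 + ((⌊n * p.1⌋ + d : ℤ) : ℝ) ^ 2 = (n : ℝ) ^ 2 := by
        push_cast
        rw [hfr, ← hyx]
        have : p.1 ^ 2 + p.2 ^ 2 = 1 := hc
        linear_combination (n : ℝ) ^ 2 * this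
      exact_mod_cast this
  · exfalso
    apply h3
    rw [Finset.mem_image]
    have hlt : (⌊n * p.1⌋ : ℝ) < n * p.1 := lt_of_le_of_ne (Int.floor_le _) hfr
    have hlt2 := Int.lt_floor_add_one (n * p.1)
    refine ⟨(⌊n * p.1⌋, ⌊n * p.1⌋ + d), ?_, by ring⟩
    rw [memQ hn]
    refine ⟨⟨p, ⟨?_, ?_, ?_, ?_⟩, hc⟩, hi0, ?_⟩
    · rw [div_lt_iff₀ hn0]; simp only; linarith
    · rw [lt_div_iff₀ hn0]; simp only; linarith
    · rw [div_lt_iff₀ hn0]; push_cast; linarith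
    · rw [lt_div_iff₀ hn0]; push_cast; linarith
    · simp only
      have : (-1 : ℝ) < ((⌊n * p.1⌋ + d : ℤ) : ℝ) := by
        push_cast
        have : 0 ≤ n * p.2 := by positivity
        linarith
      have : (-1 : ℤ) < ⌊n * p.1⌋ + d := by exact_mod_cast this
      omega

lemma quad_tendsto_u (g : ℝ × ℝ → ℝ) (hg : Continuous g) :
    Tendsto (fun n : ℕ => (∑ B ∈ boxesQ n, g (ctr n B)) / n) atTop
      (nhds (∫ u in (-1 : ℝ)..1, g (gam u))) := by
  set G : ℝ → ℝ := fun u => g (gam u) with hGdef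
  have hG : Continuous G := hg.comp gam_cont
  obtain ⟨C, hC⟩ : ∃ C, ∀ u ∈ Icc (-1 : ℝ) 1, ‖G u‖ ≤ C :=
    isCompact_Icc.exists_bound_of_continuousOn hG.continuousOn
  -- the error terms
  set e1 : ℕ → ℝ := fun n => (∑ B ∈ boxesQ n, (g (ctr n B) - G (((B.2 - B.1 : ℤ) : ℝ) / n))) / n
    with he1
  set e2 : ℕ → ℝ := fun n => (∑ d ∈ (Finset.Ico (-(n : ℤ)) n \
    (boxesQ n).image (fun B : ℤ × ℤ => B.2 - B.1)), G ((d : ℝ) / n)) / n with he2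
  have hdecomp : ∀ᶠ n : ℕ in atTop,
      (∑ d ∈ Finset.Ico (-(n : ℤ)) n, G ((d : ℝ) / n)) / n + e1 n - e2 n
        = (∑ B ∈ boxesQ n, g (ctr n B)) / n := by
    filter_upwards [eventually_gt_atTop 0] with n hn
    have hs := Finset.sum_sdiff (diag_range hn) (f := fun d : ℤ => G ((d : ℝ) / n))
    rw [Finset.sum_image (diag_inj hn)] at hs
    simp only [he1, he2]
    rw [← hs, Finset.sum_sub_distrib]
    ring
  have hcard : ∀ n : ℕ, 0 < n → ((boxesQ n).card : ℝ) ≤ 2 * n := by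
    intro n hn
    have h1 := Finset.card_le_card (diag_range hn)
    rw [Finset.card_image_of_injOn (diag_inj hn), Int.card_Ico] at h1
    have : (boxesQ n).card ≤ 2 * n := by omega
    exact_mod_cast this
  have ht1 : Tendsto e1 atTop (nhds 0) := by
    set E : ℝ × ℝ → ℝ := fun p => g p - G (p.2 - p.1) with hE
    have hEc : Continuous E := by
      apply hg.sub
      exact hG.comp (continuous_snd.sub continuous_fst)
    have huc : UniformContinuousOn E (Icc ((-2 : ℝ), (-2 : ℝ)) (2, 2)) :=
      isCompact_Icc.uniformContinuousOn_of_continuous hEc.continuousOn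
    rw [Metric.uniformContinuousOn_iff] at huc
    rw [Metric.tendsto_atTop]
    intro ε hε
    obtain ⟨δ, hδ, hu⟩ := huc (ε / 4) (by positivity)
    obtain ⟨N, hN⟩ := exists_nat_gt (1 / δ)
    refine ⟨N + 1, fun n hn => ?_⟩
    have hnpos : 0 < n := by omega
    have hn' : (N : ℝ) + 1 ≤ n := by exact_mod_cast hn
    have hn0 : (0 : ℝ) < n := lt_of_lt_of_le (by positivity) hn'
    have hnδ : 1 / (n : ℝ) < δ := by
      rw [div_lt_iff₀ hδ] at hN
      rw [div_lt_iff₀ hn0]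
      nlinarith
    have hn1 : 1 / (n : ℝ) ≤ 1 := by
      rw [div_le_one hn0]
      have : (0 : ℝ) ≤ N := by positivity
      linarith
    have hterm : ∀ B ∈ boxesQ n, |g (ctr n B) - G (((B.2 - B.1 : ℤ) : ℝ) / n)| ≤ ε / 4 := by
      intro B hB
      rw [memQ hnpos] at hB
      obtain ⟨⟨p, hpB, hp⟩, hB1, hB2⟩ := hB
      have hcl := box_close hpB (ctr_mem hnpos B)
      have hpb := circle_bound hp
      have hp1 : 0 ≤ p.1 := by
        have : (0 : ℝ) ≤ B.1 := by exact_mod_cast hB1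
        exact le_trans (by positivity) hpB.1.le
      have hp2 : 0 ≤ p.2 := by
        have : (0 : ℝ) ≤ B.2 := by exact_mod_cast hB2
        exact le_trans (by positivity) hpB.2.2.1.le
      have hE0 : E p = 0 := by
        simp only [hE, hGdef]
        rw [gam_circle hp hp1 hp2]; ring
      have hEc' : g (ctr n B) - G (((B.2 - B.1 : ℤ) : ℝ) / n) = E (ctr n B) - E p := by
        rw [hE0, sub_zero]
        simp only [hE]
        congr 2
        simp only [ctr]
        push_cast
        ring
      rw [hEc', ← Real.dist_eq]
      have a1 := abs_le.1 hcl.1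
      have a2 := abs_le.1 hcl.2
      apply (hu _ _ _ _ _).le
      · exact ⟨⟨by simp only; linarith [hpb.1.1], by simp only; linarith [hpb.2.1]⟩,
          ⟨by simp only; linarith [hpb.1.2], by simp only; linarith [hpb.2.2]⟩⟩
      · exact ⟨⟨by simp only; linarith [hpb.1.1], by simp only; linarith [hpb.2.1]⟩,
          ⟨by simp only; linarith [hpb.1.2], by simp only; linarith [hpb.2.2]⟩⟩
      · rw [dist_comm, Prod.dist_eq, Real.dist_eq, Real.dist_eq]
        exact max_lt (lt_of_le_of_lt hcl.1 hnδ) (lt_of_le_of_lt hcl.2 hnδ)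
    rw [Real.dist_eq, sub_zero]
    simp only [he1]
    rw [abs_div, abs_of_pos hn0, div_lt_iff₀ hn0]
    calc _ ≤ ∑ B ∈ boxesQ n, ε / 4 :=
          (Finset.abs_sum_le_sum_abs _ _).trans (Finset.sum_le_sum hterm)
      _ = (boxesQ n).card * (ε / 4) := by rw [Finset.sum_const, nsmul_eq_mul]
      _ ≤ 2 * n * (ε / 4) := by
          apply mul_le_mul_of_nonneg_right (hcard n hnpos); positivity
      _ < ε * n := by nlinarith
  have ht2 : Tendsto e2 atTop (nhds 0) := by
    apply squeeze_zero_norm' (a := fun n : ℕ => ((latDiag n).ncard : ℝ) / n * C)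
    · filter_upwards [eventually_gt_atTop 0] with n hn
      have hn0 : (0 : ℝ) < n := by exact_mod_cast hn
      have hC0 : 0 ≤ C := le_trans (norm_nonneg _) (hC 0 (by norm_num))
      simp only [he2]
      rw [norm_div, Real.norm_of_nonneg hn0.le, div_mul_eq_mul_div]
      apply div_le_div_of_nonneg_right _ hn0.le
      have hle : ((Finset.Ico (-(n : ℤ)) n \
          (boxesQ n).image (fun B : ℤ × ℤ => B.2 - B.1)).card : ℝ) ≤ (latDiag n).ncard := by
        rw [← Set.ncard_coe_finset]
        exact_mod_cast Set.ncard_le_ncard (diag_missing hn) (latDiag_finite n)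
      calc _ ≤ ∑ d ∈ (Finset.Ico (-(n : ℤ)) n \
            (boxesQ n).image (fun B : ℤ × ℤ => B.2 - B.1)), C := by
            apply norm_sum_le_of_le
            intro d hd
            apply hC
            rw [Finset.mem_sdiff, Finset.mem_Ico] at hd
            have h1' : (-n : ℝ) ≤ d := by exact_mod_cast hd.1.1
            have h2' : (d : ℝ) ≤ n := by exact_mod_cast hd.1.2.le
            exact ⟨by rw [le_div_iff₀ hn0]; linarith, by rw [div_le_iff₀ hn0]; linarith⟩
        _ ≤ _ := by
            rw [Finset.sum_const, nsmul_eq_mul]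
            exact mul_le_mul_of_nonneg_right hle hC0
    · simpa using latDiag_tendsto.mul_const C
  have := ((riemann_tendsto G hG).add ht1).sub ht2
  rw [add_zero, sub_zero] at this
  exact this.congr' hdecomp

lemma quad_tendsto (g : ℝ × ℝ → ℝ) (hg : Continuous g) :
    Tendsto (fun n : ℕ => (∑ B ∈ boxesQ n, g (ctr n B)) / n) atTop
      (nhds (∫ θ in (0 : ℝ)..(π / 2), g (cos θ, sin θ) * (cos θ + sin θ))) := by
  have h := quad_tendsto_u g hg
  have hsub := intervalIntegral.integral_comp_mul_deriv (a := 0) (b := π / 2)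
    (f := fun θ => sin θ - cos θ) (f' := fun θ => cos θ + sin θ) (g := fun u => g (gam u))
    (fun x _ => by
      have := (Real.hasDerivAt_sin x).sub (Real.hasDerivAt_cos x)
      have e : cos x - -sin x = cos x + sin x := by ring
      rw [e] at this
      exact this)
    (by fun_prop) (hg.comp gam_cont)
  simp only [Real.sin_zero, Real.cos_zero, Real.sin_pi_div_two, Real.cos_pi_div_two, zero_sub,
    sub_zero] at hsub
  rw [← hsub] at h
  convert h using 2
  apply intervalIntegral.integral_congr
  intro θ hθ
  rw [uIcc_of_le (by positivity)] at hθ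
  simp only [Function.comp]
  have hc : 0 ≤ cos θ := Real.cos_nonneg_of_mem_Icc ⟨by linarith [hθ.1, Real.pi_pos], hθ.2⟩
  have hs : 0 ≤ sin θ := Real.sin_nonneg_of_mem_Icc ⟨hθ.1, by linarith [hθ.2, Real.pi_pos]⟩
  rw [gam_circle (p := (cos θ, sin θ)) (Real.cos_sq_add_sin_sq θ) hc hs]

/-- The density. -/
noncomputable def wt (θ : ℝ) : ℝ := |cos θ| + |sin θ|

lemma wt_cont : Continuous wt := by unfold wt; fun_prop

lemma full_tendsto (g : ℝ × ℝ → ℝ) (hg : Continuous g) :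
    Tendsto (fun n : ℕ => (∑ B ∈ boxes n, g (ctr n B)) / n) atTop
      (nhds (∫ θ in (0 : ℝ)..(2 * π), g (cos θ, sin θ) * wt θ)) := by
  set h : ℝ × ℝ → ℝ := fun p => g p + g (-p.1, p.2) + g (-p.1, -p.2) + g (p.1, -p.2) with hh
  have hc : Continuous h := by rw [hh]; fun_prop
  have key := quad_tendsto h hc
  have hF : Continuous (fun θ => g (cos θ, sin θ) * wt θ) := by
    have := wt_cont
    fun_prop
  have hI : (∫ θ in (0 : ℝ)..(2 * π), g (cos θ, sin θ) * wt θ)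
      = ∫ θ in (0 : ℝ)..(π / 2), h (cos θ, sin θ) * (cos θ + sin θ) := by
    set F := (fun θ => g (cos θ, sin θ) * wt θ) with hFdef
    have i2 : ∫ θ in (π / 2)..π, F θ = ∫ θ in (0 : ℝ)..(π / 2), F (π - θ) := by
      rw [intervalIntegral.integral_comp_sub_left]
      congr 1 <;> ring
    have i3 : ∫ θ in π..(3 * π / 2), F θ = ∫ θ in (0 : ℝ)..(π / 2), F (π + θ) := by
      rw [intervalIntegral.integral_comp_add_left]
      congr 1 <;> ring
    have i4 : ∫ θ in (3 * π / 2)..(2 * π), F θ = ∫ θ in (0 : ℝ)..(π / 2), F (2 * π - θ) := by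
      rw [intervalIntegral.integral_comp_sub_left]
      congr 1 <;> ring
    have ii := fun a b => hF.intervalIntegrable (μ := volume) a b
    rw [← intervalIntegral.integral_add_adjacent_intervals (ii 0 (3 * π / 2)) (ii _ (2 * π)),
      ← intervalIntegral.integral_add_adjacent_intervals (ii 0 π) (ii _ (3 * π / 2)),
      ← intervalIntegral.integral_add_adjacent_intervals (ii 0 (π / 2)) (ii _ π), i2, i3, i4,
      ← intervalIntegral.integral_add, ← intervalIntegral.integral_add,
      ← intervalIntegral.integral_add]
    · apply intervalIntegral.integral_congr
      intro θ hθ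
      rw [uIcc_of_le (by positivity)] at hθ
      have hc : 0 ≤ cos θ := Real.cos_nonneg_of_mem_Icc ⟨by linarith [hθ.1, Real.pi_pos], hθ.2⟩
      have hs : 0 ≤ sin θ := Real.sin_nonneg_of_mem_Icc ⟨hθ.1, by linarith [hθ.2, Real.pi_pos]⟩
      have c3 : cos (π + θ) = - cos θ := by rw [add_comm, Real.cos_add_pi]
      have s3 : sin (π + θ) = - sin θ := by rw [add_comm, Real.sin_add_pi]
      simp only [hFdef, hh, wt, Real.cos_pi_sub, Real.sin_pi_sub, c3, s3, Real.cos_two_pi_sub,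
        Real.sin_two_pi_sub, abs_neg, abs_of_nonneg hc, abs_of_nonneg hs]
      ring
    all_goals apply Continuous.intervalIntegrable; fun_prop
  rw [hI]
  refine key.congr' ?_
  filter_upwards [eventually_gt_atTop 0] with n hn
  rw [sum_boxes hn]
  congr 1
  apply Finset.sum_congr rfl
  intro B _
  have r1 : ((-1 - B.1 : ℤ) : ℝ) + 1 / 2 = -((B.1 : ℝ) + 1 / 2) := by push_cast; ring
  have r2 : ((-1 - B.2 : ℤ) : ℝ) + 1 / 2 = -((B.2 : ℝ) + 1 / 2) := by push_cast; ring
  simp only [hh, ctr, r1, r2, neg_div]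

lemma wt_periodic : Function.Periodic wt (π / 2) := by
  intro x
  simp only [wt, Real.cos_add_pi_div_two, Real.sin_add_pi_div_two, abs_neg]
  ring

/-- Antiderivative of the density on the first quadrant. -/
noncomputable def PP (x : ℝ) : ℝ := sin x - cos x

lemma PP_cont : Continuous PP := by unfold PP; fun_prop

lemma PP_deriv (x : ℝ) : HasDerivAt PP (cos x + sin x) x := by
  have := (Real.hasDerivAt_sin x).sub (Real.hasDerivAt_cos x)
  have e : cos x - -sin x = cos x + sin x := by ring
  rw [e] at this
  exact this

lemma wt_eq {θ : ℝ} (h0 : 0 ≤ θ) (h1 : θ ≤ π / 2) : wt θ = cos θ + sin θ := by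
  have hc : 0 ≤ cos θ := Real.cos_nonneg_of_mem_Icc ⟨by linarith [Real.pi_pos], h1⟩
  have hs : 0 ≤ sin θ := Real.sin_nonneg_of_mem_Icc ⟨h0, by linarith [Real.pi_pos]⟩
  rw [wt, abs_of_nonneg hc, abs_of_nonneg hs]

lemma wt_int {a b : ℝ} (ha : 0 ≤ a) (hab : a ≤ b) (hb : b ≤ π / 2) :
    ∫ x in a..b, wt x = PP b - PP a := by
  rw [← intervalIntegral.integral_eq_sub_of_hasDerivAt (fun x _ => PP_deriv x)
    (by apply Continuous.intervalIntegrable; fun_prop)]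
  apply intervalIntegral.integral_congr
  intro x hx
  rw [uIcc_of_le hab] at hx
  exact wt_eq (ha.trans hx.1) (hx.2.trans hb)

lemma wt_int_period (t : ℝ) : ∫ x in t..(t + π / 2), wt x = 2 := by
  rw [wt_periodic.intervalIntegral_add_eq t 0, zero_add,
    wt_int le_rfl (by positivity) le_rfl]
  simp [PP]
  norm_num

lemma wt_shift (a b : ℝ) : ∫ x in (a + π / 2)..(b + π / 2), wt x = ∫ x in a..b, wt x := by
  rw [← intervalIntegral.integral_comp_add_right]
  simp only [wt_periodic _]

/-- Mass of the window of far away angles. -/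
noncomputable def UU (θ : ℝ) : ℝ := ∫ x in (θ + 2 * π / 3)..(θ + 4 * π / 3), wt x

lemma wt_ii (a b : ℝ) : IntervalIntegrable wt volume a b := wt_cont.intervalIntegrable _ _

lemma UU_eq (θ : ℝ) : UU θ = 2 + ∫ x in (θ + π / 6)..(θ + π / 3), wt x := by
  unfold UU
  rw [← intervalIntegral.integral_add_adjacent_intervals (wt_ii _ (θ + 5 * π / 6)) (wt_ii _ _)]
  have e1 : θ + 4 * π / 3 = θ + 5 * π / 6 + π / 2 := by ring
  have e2 : θ + 2 * π / 3 = θ + π / 6 + π / 2 := by ring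
  have e3 : θ + 5 * π / 6 = θ + π / 3 + π / 2 := by ring
  rw [e1, wt_int_period, e2, e3, wt_shift]
  ring

lemma UU_cont : Continuous UU := by
  have h : ∀ θ, UU θ = (∫ x in (0 : ℝ)..(θ + 4 * π / 3), wt x) -
      ∫ x in (0 : ℝ)..(θ + 2 * π / 3), wt x := by
    intro θ
    rw [intervalIntegral.integral_interval_sub_left (wt_ii _ _) (wt_ii _ _)]
    rfl
  have hc : Continuous (fun b => ∫ x in (0 : ℝ)..b, wt x) :=
    intervalIntegral.continuous_primitive wt_ii 0
  have : UU = fun θ => (∫ x in (0 : ℝ)..(θ + 4 * π / 3), wt x) -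
      ∫ x in (0 : ℝ)..(θ + 2 * π / 3), wt x := funext h
  rw [this]
  exact (hc.comp (by fun_prop : Continuous fun θ : ℝ => θ + 4 * π / 3)).sub
    (hc.comp (by fun_prop : Continuous fun θ : ℝ => θ + 2 * π / 3))

lemma UU_nonneg (θ : ℝ) : 0 ≤ UU θ := by
  apply intervalIntegral.integral_nonneg
  · linarith [Real.pi_pos]
  · intro x _
    unfold wt
    positivity

lemma UU_periodic : Function.Periodic UU (π / 2) := by
  intro θ
  unfold UU
  rw [← wt_shift (θ + 2 * π / 3) (θ + 4 * π / 3)]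
  congr 1 <;> ring

lemma QQ_int (c a b : ℝ) : ∫ θ in a..b, PP (θ + c) * (cos θ + sin θ)
    = (b * sin c - sin (2 * b + c) / 2) - (a * sin c - sin (2 * a + c) / 2) := by
  have hd : ∀ x : ℝ, HasDerivAt (fun x => x * sin c - sin (2 * x + c) / 2)
      (PP (x + c) * (cos x + sin x)) x := by
    intro x
    have h1 : HasDerivAt (fun x : ℝ => 2 * x + c) 2 x := by
      simpa using ((hasDerivAt_id x).const_mul 2).add_const c
    have h2 := (h1.sin).div_const 2
    have h3 := ((hasDerivAt_id x).mul_const (sin c)).sub h2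
    have e : 1 * sin c - cos (2 * x + c) * 2 / 2 = PP (x + c) * (cos x + sin x) := by
      have k1 : cos (2 * x + c) = cos x * cos (x + c) - sin x * sin (x + c) := by
        rw [← Real.cos_add]; congr 1; ring
      have k2 : sin c = sin (x + c) * cos x - cos (x + c) * sin x := by
        rw [← Real.sin_sub]; congr 1; ring
      rw [k1]
      simp only [PP]
      rw [k2]
      ring
    rw [e] at h3
    exact h3
  rw [intervalIntegral.integral_eq_sub_of_hasDerivAt (fun x _ => hd x)]
  apply Continuous.intervalIntegrable
  have := PP_cont
  fun_prop

lemma sin_2pi3 : sin (2 * π / 3) = √3 / 2 := by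
  rw [show 2 * π / 3 = π - π / 3 by ring, Real.sin_pi_sub, Real.sin_pi_div_three]

lemma sin_5pi6 : sin (5 * π / 6) = 1 / 2 := by
  rw [show 5 * π / 6 = π - π / 6 by ring, Real.sin_pi_sub, Real.sin_pi_div_six]

lemma quarter_int : ∫ θ in (0 : ℝ)..(π / 2), UU θ * wt θ
    = 2 + 2 * √3 - π * (2 - √3) / 6 := by
  have hpi := Real.pi_pos
  have hc : Continuous (fun θ => UU θ * wt θ) := UU_cont.mul wt_cont
  have ii := fun a b => hc.intervalIntegrable (μ := volume) a b
  have hPc : ∀ c a b : ℝ, IntervalIntegrable (fun θ => PP (θ + c) * (cos θ + sin θ)) volume a b := by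
    intro c a b
    apply Continuous.intervalIntegrable
    have := PP_cont
    fun_prop
  have hW : ∀ a b : ℝ, IntervalIntegrable (fun θ => cos θ + sin θ) volume a b := by
    intro a b
    apply Continuous.intervalIntegrable
    fun_prop
  have hWi : ∀ a b : ℝ, ∫ θ in a..b, (cos θ + sin θ) = PP b - PP a := fun a b =>
    intervalIntegral.integral_eq_sub_of_hasDerivAt (fun x _ => PP_deriv x) (hW a b)
  have I1 : ∫ θ in (0 : ℝ)..(π / 6), UU θ * wt θ = ∫ θ in (0 : ℝ)..(π / 6),
      (2 * (cos θ + sin θ) + PP (θ + π / 3) * (cos θ + sin θ)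
        - PP (θ + π / 6) * (cos θ + sin θ)) := by
    apply intervalIntegral.integral_congr
    intro θ hθ
    rw [uIcc_of_le (by positivity)] at hθ
    obtain ⟨h0, h1⟩ := hθ
    simp only
    rw [UU_eq, wt_int (by linarith) (by linarith) (by linarith),
      wt_eq (by linarith) (by linarith)]
    ring
  have I2 : ∫ θ in (π / 6)..(π / 3), UU θ * wt θ = ∫ θ in (π / 6)..(π / 3),
      (4 * (cos θ + sin θ) + PP (θ + (-(π / 6))) * (cos θ + sin θ)
        - PP (θ + π / 6) * (cos θ + sin θ)) := by
    apply intervalIntegral.integral_congr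
    intro θ hθ
    rw [uIcc_of_le (by linarith)] at hθ
    obtain ⟨h0, h1⟩ := hθ
    simp only
    have e1 : ∫ x in (π / 2)..(θ + π / 3), wt x = PP (θ + (-(π / 6))) - PP 0 := by
      rw [← wt_int (by linarith) (by linarith) (by linarith), ← wt_shift 0 (θ + (-(π / 6)))]
      congr 1 <;> ring
    rw [UU_eq, ← intervalIntegral.integral_add_adjacent_intervals (wt_ii _ (π / 2)) (wt_ii _ _),
      e1, wt_int (by linarith) (by linarith) (by linarith), wt_eq (by linarith) (by linarith)]
    have p0 : PP 0 = -1 := by simp [PP]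
    have p1 : PP (π / 2) = 1 := by simp [PP]
    rw [p0, p1]
    ring
  have I3 : ∫ θ in (π / 3)..(π / 2), UU θ * wt θ = ∫ θ in (π / 3)..(π / 2),
      (2 * (cos θ + sin θ) + PP (θ + (-(π / 6))) * (cos θ + sin θ)
        - PP (θ + (-(π / 3))) * (cos θ + sin θ)) := by
    apply intervalIntegral.integral_congr
    intro θ hθ
    rw [uIcc_of_le (by linarith)] at hθ
    obtain ⟨h0, h1⟩ := hθ
    simp only
    have e1 : ∫ x in (θ + π / 6)..(θ + π / 3), wt x =
        PP (θ + (-(π / 6))) - PP (θ + (-(π / 3))) := by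
      rw [← wt_int (by linarith) (by linarith) (by linarith), ← wt_shift (θ + (-(π / 3))) (θ + (-(π / 6)))]
      congr 1 <;> ring
    rw [UU_eq, e1, wt_eq (by linarith) (by linarith)]
    ring
  rw [← intervalIntegral.integral_add_adjacent_intervals (ii 0 (π / 3)) (ii _ _),
    ← intervalIntegral.integral_add_adjacent_intervals (ii 0 (π / 6)) (ii _ _), I1, I2, I3]
  have split : ∀ k c d a b : ℝ, ∫ θ in a..b, (k * (cos θ + sin θ) + PP (θ + c) * (cos θ + sin θ)
        - PP (θ + d) * (cos θ + sin θ)) = k * (PP b - PP a) +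
      ((b * sin c - sin (2 * b + c) / 2) - (a * sin c - sin (2 * a + c) / 2)) -
      ((b * sin d - sin (2 * b + d) / 2) - (a * sin d - sin (2 * a + d) / 2)) := by
    intro k c d a b
    rw [intervalIntegral.integral_sub (((hW a b).const_mul k).add (hPc c a b)) (hPc d a b),
      intervalIntegral.integral_add ((hW a b).const_mul k) (hPc c a b),
      intervalIntegral.integral_const_mul, hWi, QQ_int, QQ_int]
  rw [split, split, split]
  rw [show 2 * (π / 6) + π / 3 = 2 * π / 3 by ring, show 2 * 0 + π / 3 = π / 3 by ring,
    show 2 * (π / 6) + π / 6 = π / 2 by ring, show 2 * 0 + π / 6 = π / 6 by ring,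
    show 2 * (π / 3) + -(π / 6) = π / 2 by ring, show 2 * (π / 6) + -(π / 6) = π / 6 by ring,
    show 2 * (π / 3) + π / 6 = 5 * π / 6 by ring,
    show 2 * (π / 2) + -(π / 6) = 5 * π / 6 by ring,
    show 2 * (π / 2) + -(π / 3) = 2 * π / 3 by ring, show 2 * (π / 3) + -(π / 3) = π / 3 by ring]
  simp only [PP, Real.sin_neg, sin_2pi3, sin_5pi6, Real.sin_pi_div_three, Real.sin_pi_div_six,
    Real.sin_pi_div_two, Real.cos_pi_div_three, Real.cos_pi_div_six, Real.cos_pi_div_two,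
    Real.sin_zero, Real.cos_zero]
  ring

lemma periodic_four {f : ℝ → ℝ} (hf : Function.Periodic f (π / 2)) (hc : Continuous f) :
    ∫ θ in (0 : ℝ)..(2 * π), f θ = 4 * ∫ θ in (0 : ℝ)..(π / 2), f θ := by
  have ii := fun a b => hc.intervalIntegrable (μ := volume) a b
  have h := fun t => hf.intervalIntegral_add_eq t 0
  rw [← intervalIntegral.integral_add_adjacent_intervals (ii 0 (3 * (π / 2))) (ii _ (2 * π)),
      ← intervalIntegral.integral_add_adjacent_intervals (ii 0 (2 * (π / 2))) (ii _ _),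
      ← intervalIntegral.integral_add_adjacent_intervals (ii 0 (π / 2)) (ii _ _),
      show 2 * π = 3 * (π / 2) + π / 2 by ring, h,
      show 3 * (π / 2) = 2 * (π / 2) + π / 2 by ring, h,
      show 2 * (π / 2) = (π / 2) + π / 2 by ring, h, zero_add]
  ring

lemma total_int : ∫ θ in (0 : ℝ)..(2 * π), UU θ * wt θ
    = 64 * ((1 + √3) / 8 - π * (2 - √3) / 96) := by
  rw [periodic_four (f := fun θ => UU θ * wt θ) (UU_periodic.mul wt_periodic)
    (UU_cont.mul wt_cont), quarter_int]
  ring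

lemma wt_total : ∫ θ in (0 : ℝ)..(2 * π), wt θ = 8 := by
  rw [periodic_four wt_periodic wt_cont]
  have := wt_int_period 0
  rw [zero_add] at this
  rw [this]
  norm_num

lemma wt_nonneg (θ : ℝ) : 0 ≤ wt θ := by unfold wt; positivity

/-- Limit measure on angles. -/
noncomputable def angM : Measure ℝ :=
  (volume.restrict (Ioc 0 (2 * π))).withDensity (fun θ => ENNReal.ofReal (wt θ / 8))

lemma angM_integral (f : ℝ → ℝ) :
    ∫ θ, f θ ∂angM = ∫ θ in (0 : ℝ)..(2 * π), f θ * (wt θ / 8) := by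
  unfold angM
  rw [integral_withDensity_eq_integral_toReal_smul (by have := wt_cont; fun_prop) (by simp),
    intervalIntegral.integral_of_le (by positivity)]
  congr 1
  ext θ
  rw [ENNReal.toReal_ofReal (by have := wt_nonneg θ; positivity), smul_eq_mul, mul_comm]

lemma angM_univ : angM univ = 1 := by
  unfold angM
  rw [withDensity_apply _ MeasurableSet.univ, Measure.restrict_univ,
    ← ofReal_integral_eq_lintegral_ofReal]
  · rw [← intervalIntegral.integral_of_le (by positivity), intervalIntegral.integral_div, wt_total]
    norm_num
  · have : IntervalIntegrable (fun θ => wt θ / 8) volume 0 (2 * π) := (wt_ii _ _).div_const 8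
    rw [intervalIntegrable_iff_integrableOn_Ioc_of_le (by positivity)] at this
    exact this
  · exact ae_of_all _ (fun θ => by have := wt_nonneg θ; simp only [Pi.zero_apply]; positivity)

instance : IsProbabilityMeasure angM := ⟨angM_univ⟩

lemma cos_lt_half {t : ℝ} (h1 : 2 * π / 3 < t) (h2 : t < 4 * π / 3) : cos t < -1 / 2 := by
  have hpi := Real.pi_pos
  have e : cos t = - cos (t - π) := by rw [Real.cos_sub_pi]; ring
  have h3 : cos (π / 3) < cos (|t - π|) := by
    apply Real.cos_lt_cos_of_nonneg_of_le_pi (abs_nonneg _) (by linarith)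
    rw [abs_lt]; constructor <;> linarith
  rw [Real.cos_abs, Real.cos_pi_div_three] at h3
  linarith

lemma half_lt_cos {t : ℝ} (h1 : |t| < 2 * π / 3) : -1 / 2 < cos t := by
  have hpi := Real.pi_pos
  have h3 : cos (2 * π / 3) < cos (|t|) := by
    apply Real.cos_lt_cos_of_nonneg_of_le_pi (abs_nonneg _) (by linarith) h1
  have e : cos (2 * π / 3) = -1 / 2 := by
    rw [show 2 * π / 3 = π - π / 3 by ring, Real.cos_pi_sub, Real.cos_pi_div_three]; norm_num
  rw [Real.cos_abs, e] at h3
  exact h3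

lemma window_mass (θ : ℝ) (T : Set ℝ) (hT : MeasurableSet T)
    (hper : ∀ φ, φ + 2 * π ∈ T ↔ φ ∈ T)
    (h1 : ∀ φ, cos (φ - θ) < -1 / 2 → φ ∈ T) (h2 : ∀ φ ∈ T, cos (φ - θ) ≤ -1 / 2) :
    angM T = ENNReal.ofReal (UU θ / 8) := by
  have hpi := Real.pi_pos
  have e1 : angM.real T = UU θ / 8 := by
    rw [← integral_indicator_one hT, angM_integral]
    set f : ℝ → ℝ := fun φ => T.indicator 1 φ * (wt φ / 8) with hf
    have hfp : Function.Periodic f (2 * π) := by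
      intro φ
      have hw : wt (φ + 2 * π) = wt φ := by simp [wt]
      simp only [hf, hw]
      by_cases h : φ ∈ T
      · rw [Set.indicator_of_mem h, Set.indicator_of_mem ((hper φ).2 h)]; rfl
      · rw [Set.indicator_of_notMem h, Set.indicator_of_notMem (fun h' => h ((hper φ).1 h'))]
    have z1 : ∀ a b : ℝ, a ≤ b → (∀ φ ∈ Ioo a b, φ ∉ T) →
        IntervalIntegrable f volume a b ∧ ∫ φ in a..b, f φ = 0 := by
      intro a b hab hn
      have hae : ∀ᵐ φ ∂(volume.restrict (Ioc a b)), f φ = 0 := by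
        rw [← restrict_Ioo_eq_restrict_Ioc]
        filter_upwards [ae_restrict_mem measurableSet_Ioo] with φ hφ
        simp only [hf]
        rw [Set.indicator_of_notMem (hn φ hφ), zero_mul]
      constructor
      · rw [intervalIntegrable_iff_integrableOn_Ioc_of_le hab]
        exact (integrable_zero ℝ ℝ _).congr (hae.mono fun φ h => h.symm)
      · rw [intervalIntegral.integral_of_le hab, integral_congr_ae hae]
        simp
    have z2 : ∀ a b : ℝ, a ≤ b → (∀ φ ∈ Ioo a b, φ ∈ T) →
        IntervalIntegrable f volume a b ∧ ∫ φ in a..b, f φ = ∫ φ in a..b, wt φ / 8 := by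
      intro a b hab hn
      have hae : ∀ᵐ φ ∂(volume.restrict (Ioc a b)), f φ = wt φ / 8 := by
        rw [← restrict_Ioo_eq_restrict_Ioc]
        filter_upwards [ae_restrict_mem measurableSet_Ioo] with φ hφ
        simp only [hf]
        rw [Set.indicator_of_mem (hn φ hφ), Pi.one_apply, one_mul]
      constructor
      · have : IntervalIntegrable (fun θ => wt θ / 8) volume a b := (wt_ii _ _).div_const 8
        rw [intervalIntegrable_iff_integrableOn_Ioc_of_le hab] at this ⊢
        exact Integrable.congr this (hae.mono fun φ h => h.symm)
      · rw [intervalIntegral.integral_of_le hab, intervalIntegral.integral_of_le hab,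
          integral_congr_ae hae]
    obtain ⟨a1, b1⟩ := z1 θ (θ + 2 * π / 3) (by linarith) (by
      intro φ hφ hφT
      have := half_lt_cos (t := φ - θ) (by rw [abs_lt]; constructor <;> linarith [hφ.1, hφ.2])
      linarith [h2 φ hφT])
    obtain ⟨a2, b2⟩ := z2 (θ + 2 * π / 3) (θ + 4 * π / 3) (by linarith) (by
      intro φ hφ
      exact h1 φ (cos_lt_half (by linarith [hφ.1]) (by linarith [hφ.2])))
    obtain ⟨a3, b3⟩ := z1 (θ + 4 * π / 3) (θ + 2 * π) (by linarith) (by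
      intro φ hφ hφT
      have := half_lt_cos (t := φ - θ - 2 * π)
        (by rw [abs_lt]; constructor <;> linarith [hφ.1, hφ.2])
      rw [Real.cos_sub_two_pi] at this
      linarith [h2 φ hφT])
    have hshift := hfp.intervalIntegral_add_eq 0 θ
    rw [zero_add] at hshift
    rw [hshift, ← intervalIntegral.integral_add_adjacent_intervals (a1.trans a2) a3,
      ← intervalIntegral.integral_add_adjacent_intervals a1 a2, b1, b2, b3,
      intervalIntegral.integral_div]
    simp [UU]
  rw [← e1, ofReal_measureReal]

/-- The target value. -/
noncomputable def LL : ℝ := (1 + √3) / 8 - π * (2 - √3) / 96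

/-- Parametrisation of the circle. -/
noncomputable def circ (θ : ℝ) : ℝ × ℝ := (cos θ, sin θ)

lemma circ_cont : Continuous circ := by unfold circ; fun_prop

/-- Euclidean distance. -/
noncomputable def DD (x : (ℝ × ℝ) × (ℝ × ℝ)) : ℝ :=
  √((x.1.1 - x.2.1) ^ 2 + (x.1.2 - x.2.2) ^ 2)

lemma DD_cont : Continuous DD := by unfold DD; fun_prop

lemma DD_circ (θ φ : ℝ) : DD (circ θ, circ φ) = √(2 - 2 * cos (φ - θ)) := by
  unfold DD circ
  congr 1
  simp only
  rw [Real.cos_sub]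
  linear_combination Real.cos_sq_add_sin_sq θ + Real.cos_sq_add_sin_sq φ

/-- Limit measure on the plane. -/
noncomputable def planeM : Measure (ℝ × ℝ) := angM.map circ

instance : IsProbabilityMeasure planeM :=
  Measure.isProbabilityMeasure_map circ_cont.measurable.aemeasurable

lemma prod_mass (S : Set ((ℝ × ℝ) × (ℝ × ℝ))) (hS : MeasurableSet S)
    (h1 : ∀ x, √3 < DD x → x ∈ S) (h2 : ∀ x ∈ S, √3 ≤ DD x) :
    (planeM.prod planeM) S = ENNReal.ofReal LL := by
  unfold planeM
  rw [Measure.map_prod_map _ _ circ_cont.measurable circ_cont.measurable,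
    Measure.map_apply (circ_cont.measurable.prodMap circ_cont.measurable) hS,
    Measure.prod_apply ((circ_cont.measurable.prodMap circ_cont.measurable) hS)]
  have hw : ∀ θ, angM (Prod.mk θ ⁻¹' (Prod.map circ circ ⁻¹' S)) = ENNReal.ofReal (UU θ / 8) := by
    intro θ
    apply window_mass
    · exact measurable_prodMk_left ((circ_cont.measurable.prodMap circ_cont.measurable) hS)
    · intro φ
      simp [circ]
    · intro φ h
      apply h1
      rw [Prod.map_apply, DD_circ]
      apply Real.sqrt_lt_sqrt (by norm_num)
      linarith
    · intro φ h
      have := h2 _ h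
      rw [Prod.map_apply, DD_circ] at this
      rw [Real.sqrt_le_sqrt_iff (by linarith [Real.cos_le_one (φ - θ)])] at this
      linarith
  simp only [hw]
  have hbd : Integrable (fun θ => UU θ / 8) angM := by
    have hb : ∀ θ, ‖UU θ / 8‖ ≤ 1 := by
      intro θ
      have h := hw θ
      have hle : ENNReal.ofReal (UU θ / 8) ≤ 1 := by rw [← h]; exact prob_le_one
      rw [Real.norm_of_nonneg (by have := UU_nonneg θ; positivity)]
      simpa using hle
    exact Integrable.of_bound (by have := UU_cont; fun_prop) 1 (ae_of_all _ hb)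
  rw [← ofReal_integral_eq_lintegral_ofReal hbd
    (ae_of_all _ (fun θ => by have := UU_nonneg θ; simp only [Pi.zero_apply]; positivity)),
    angM_integral]
  congr 1
  have : ∀ θ, UU θ / 8 * (wt θ / 8) = (UU θ * wt θ) / 64 := fun θ => by ring
  simp only [this]
  rw [intervalIntegral.integral_div, total_int]
  unfold LL
  ring

/-- Empirical measure of the boxes. -/
noncomputable def empM (n : ℕ) : Measure (ℝ × ℝ) :=
  ((boxes n).card : ENNReal)⁻¹ • ∑ B ∈ boxes n, Measure.dirac (ctr n B)

lemma empM_prob {n : ℕ} (h : (boxes n).Nonempty) : IsProbabilityMeasure (empM n) := by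
  constructor
  unfold empM
  simp only [Measure.smul_apply, Measure.finsetSum_apply, measure_univ, Finset.sum_const,
    smul_eq_mul, nsmul_eq_mul, mul_one]
  apply ENNReal.inv_mul_cancel
  · exact_mod_cast h.card_pos.ne'
  · exact ENNReal.natCast_ne_top _

open Classical in
/-- Empirical probability measure of the boxes. -/
noncomputable def empP (n : ℕ) : ProbabilityMeasure (ℝ × ℝ) :=
  if h : (boxes n).Nonempty then ⟨empM n, empM_prob h⟩ else ⟨Measure.dirac 0, inferInstance⟩

lemma empP_coe {n : ℕ} (h : (boxes n).Nonempty) : (empP n : Measure (ℝ × ℝ)) = empM n := by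
  simp [empP, h]

lemma empM_integral (n : ℕ) (f : ℝ × ℝ → ℝ) :
    ∫ x, f x ∂(empM n) = (∑ B ∈ boxes n, f (ctr n B)) / (boxes n).card := by
  unfold empM
  rw [integral_smul_measure, integral_finsetSum_measure]
  · simp only [integral_dirac, ENNReal.toReal_inv, ENNReal.toReal_natCast, smul_eq_mul]
    ring
  · intro B _
    apply integrable_dirac
    simp

open Classical in
lemma empM_prod (n : ℕ) (S : Set ((ℝ × ℝ) × (ℝ × ℝ))) (hS : MeasurableSet S)
    (h : (boxes n).Nonempty) :
    ((empM n).prod (empM n)) S = ENNReal.ofReal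
      ((((boxes n) ×ˢ (boxes n)).filter (fun x => (ctr n x.1, ctr n x.2) ∈ S)).card
        / ((boxes n).card : ℝ) ^ 2) := by
  have hc : (0 : ℝ) < (boxes n).card := by exact_mod_cast h.card_pos
  have := empM_prob h
  have hin : ∀ p, empM n (Prod.mk p ⁻¹' S) = ((boxes n).card : ENNReal)⁻¹ *
      ∑ B ∈ boxes n, if (p, ctr n B) ∈ S then 1 else 0 := by
    intro p
    unfold empM
    simp only [Measure.smul_apply, Measure.finsetSum_apply, smul_eq_mul]
    congr 1
    apply Finset.sum_congr rfl
    intro B _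
    rw [Measure.dirac_apply' _ (measurable_prodMk_left hS)]
    simp [Set.indicator_apply]
  rw [Measure.prod_apply hS]
  simp only [hin]
  rw [empM, lintegral_smul_measure, lintegral_finsetSum_measure]
  simp only [lintegral_dirac, smul_eq_mul]
  rw [← Finset.mul_sum, ← Finset.sum_product', Finset.sum_boole]
  rw [div_eq_mul_inv, ENNReal.ofReal_mul (by positivity), ENNReal.ofReal_natCast, mul_comm, sq,
    mul_inv, ENNReal.ofReal_mul (by positivity), ENNReal.ofReal_inv_of_pos hc,
    ENNReal.ofReal_natCast]
  ring

lemma card_tendsto : Tendsto (fun n : ℕ => ((boxes n).card : ℝ) / n) atTop (nhds 8) := by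
  have := full_tendsto (fun _ => 1) continuous_const
  simpa [wt_total] using this

lemma ev_nonempty : ∀ᶠ n : ℕ in atTop, (boxes n).Nonempty := by
  have := card_tendsto.eventually (lt_mem_nhds (by norm_num : (0 : ℝ) < 8))
  filter_upwards [this] with n hn
  by_contra hc
  rw [Finset.not_nonempty_iff_eq_empty] at hc
  simp [hc] at hn

/-- Limit probability measure on the plane. -/
noncomputable def planeP : ProbabilityMeasure (ℝ × ℝ) := ⟨planeM, inferInstance⟩

lemma planeP_coe : (planeP : Measure (ℝ × ℝ)) = planeM := rfl

lemma emp_tendsto : Tendsto empP atTop (nhds planeP) := by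
  rw [ProbabilityMeasure.tendsto_iff_forall_integral_tendsto]
  intro f
  have h1 := (full_tendsto f f.continuous).div card_tendsto (by norm_num)
  have e : ∫ x, f x ∂planeM = (∫ θ in (0 : ℝ)..(2 * π), f (cos θ, sin θ) * wt θ) / 8 := by
    unfold planeM
    rw [integral_map circ_cont.measurable.aemeasurable f.continuous.aestronglyMeasurable,
      angM_integral, ← intervalIntegral.integral_div]
    congr 1
    ext θ
    simp only [circ]
    ring
  rw [planeP_coe, e]
  refine h1.congr' ?_
  filter_upwards [ev_nonempty, eventually_gt_atTop 0] with n hn hn0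
  rw [empP_coe hn, empM_integral n f]
  have : (0 : ℝ) < n := by exact_mod_cast hn0
  simp only [Pi.div_apply]
  field_simp

lemma prod_tendsto_gen (μs : ℕ → ProbabilityMeasure (ℝ × ℝ)) (μ : ProbabilityMeasure (ℝ × ℝ))
    (h : Tendsto μs atTop (nhds μ)) :
    Tendsto (fun n => (μs n).prod (μs n)) atTop (nhds (μ.prod μ)) := by
  have hc := (ProbabilityMeasure.continuous_prod (α := ℝ × ℝ) (β := ℝ × ℝ)).tendsto (μ, μ)
  have h2 : Tendsto (fun n => (μs n, μs n)) atTop (nhds (μ, μ)) := h.prodMk_nhds h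
  exact Tendsto.comp hc h2

lemma prod_tendsto : Tendsto (fun n => (empP n).prod (empP n)) atTop
    (nhds (planeP.prod planeP)) :=
  prod_tendsto_gen empP planeP emp_tendsto

/-- Ratio in the theorem. -/
noncomputable def rat (n : ℕ) : ℝ :=
  ((longChords n).ncard : ℝ) / ((approx n unitCircle).ncard : ℝ) ^ 2

lemma approx_ncard {n : ℕ} (hn : 0 < n) : (approx n unitCircle).ncard = (boxes n).card := by
  rw [← Set.ncard_coe_finset]
  congr 1
  ext B
  rw [Finset.mem_coe, mem_boxes hn]

lemma longChords_finite {n : ℕ} (hn : 0 < n) : (longChords n).Finite :=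
  ((approx_finite hn).prod (approx_finite hn)).subset (fun _ hq => ⟨hq.1, hq.2.1⟩)

lemma lower_bound {n : ℕ} (hn : 0 < n) (h : (boxes n).Nonempty) :
    ((empM n).prod (empM n)) {x | √3 < DD x} ≤ ENNReal.ofReal (rat n) := by
  classical
  rw [empM_prod n _ (isOpen_lt continuous_const DD_cont).measurableSet h]
  apply ENNReal.ofReal_le_ofReal
  unfold rat
  rw [approx_ncard hn]
  apply div_le_div_of_nonneg_right _ (by positivity)
  rw [← Set.ncard_coe_finset]
  apply Nat.cast_le.2
  apply Set.ncard_le_ncard _ (longChords_finite hn)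
  intro q hq
  rw [Finset.mem_coe, Finset.mem_filter, Finset.mem_product, mem_boxes hn, mem_boxes hn] at hq
  exact ⟨hq.1.1, hq.1.2, _, ctr_mem hn _, _, ctr_mem hn _, hq.2⟩

lemma DD_perturb {n : ℕ} {i j i' j' : ℤ} {a c b d : ℝ × ℝ} (ha : a ∈ boxInt n i j)
    (hc : c ∈ boxInt n i j) (hb : b ∈ boxInt n i' j') (hd : d ∈ boxInt n i' j') :
    DD (a, b) ≤ DD (c, d) + 4 / n := by
  have hD : ∀ p q : ℝ × ℝ, DD (p, q) = ‖(⟨p.1 - q.1, p.2 - q.2⟩ : ℂ)‖ := by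
    intro p q
    rw [Complex.norm_eq_sqrt_sq_add_sq]
    rfl
  have h1 := box_close ha hc
  have h2 := box_close hb hd
  have n1 : ‖(⟨a.1 - c.1, a.2 - c.2⟩ : ℂ)‖ ≤ 2 / n := by
    refine (Complex.norm_le_abs_re_add_abs_im _).trans ?_
    have : (2 : ℝ) / n = 1 / n + 1 / n := by ring
    rw [this]
    exact add_le_add h1.1 h1.2
  have n2 : ‖(⟨b.1 - d.1, b.2 - d.2⟩ : ℂ)‖ ≤ 2 / n := by
    refine (Complex.norm_le_abs_re_add_abs_im _).trans ?_
    have : (2 : ℝ) / n = 1 / n + 1 / n := by ring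
    rw [this]
    exact add_le_add h2.1 h2.2
  have e : (⟨a.1 - b.1, a.2 - b.2⟩ : ℂ) = ⟨c.1 - d.1, c.2 - d.2⟩ + ⟨a.1 - c.1, a.2 - c.2⟩
      - ⟨b.1 - d.1, b.2 - d.2⟩ := by
    apply Complex.ext <;> simp
  have e4 : (4 : ℝ) / n = 2 / n + 2 / n := by ring
  rw [hD, hD, e, e4]
  have k1 := norm_sub_le ((⟨c.1 - d.1, c.2 - d.2⟩ : ℂ) + ⟨a.1 - c.1, a.2 - c.2⟩)
    ⟨b.1 - d.1, b.2 - d.2⟩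
  have k2 := norm_add_le (⟨c.1 - d.1, c.2 - d.2⟩ : ℂ) ⟨a.1 - c.1, a.2 - c.2⟩
  linarith

lemma upper_bound {n m : ℕ} (hn : 0 < n) (hm : 4 * (m + 1) ≤ n) (h : (boxes n).Nonempty) :
    ENNReal.ofReal (rat n) ≤
      ((empM n).prod (empM n)) {x | √3 - 1 / ((m : ℝ) + 1) ≤ DD x} := by
  classical
  rw [empM_prod n _ (isClosed_le continuous_const DD_cont).measurableSet h]
  apply ENNReal.ofReal_le_ofReal
  unfold rat
  rw [approx_ncard hn]
  apply div_le_div_of_nonneg_right _ (by positivity)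
  rw [← Set.ncard_coe_finset]
  apply Nat.cast_le.2
  apply Set.ncard_le_ncard _ (Finset.finite_toSet _)
  rintro q ⟨h1, h2, a, ha, b, hb, hab⟩
  rw [Finset.mem_coe, Finset.mem_filter, Finset.mem_product, mem_boxes hn, mem_boxes hn]
  refine ⟨⟨h1, h2⟩, ?_⟩
  have hp := DD_perturb ha (ctr_mem hn _) hb (ctr_mem hn _)
  have hab' : √3 < DD (a, b) := hab
  have hle : (4 : ℝ) / n ≤ 1 / ((m : ℝ) + 1) := by
    rw [div_le_div_iff₀ (by exact_mod_cast hn) (by positivity)]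
    have : (4 * (m + 1) : ℝ) ≤ n := by exact_mod_cast hm
    linarith
  rw [Set.mem_ofPred_eq]
  linarith

lemma LL_nonneg : 0 ≤ LL := by
  have h := total_int
  have : 0 ≤ ∫ θ in (0 : ℝ)..(2 * π), UU θ * wt θ := by
    apply intervalIntegral.integral_nonneg (by positivity)
    intro θ _
    exact mul_nonneg (UU_nonneg θ) (wt_nonneg θ)
  unfold LL
  linarith

lemma inter_tendsto : Tendsto (fun m : ℕ =>
    (planeM.prod planeM) {x | √3 - 1 / ((m : ℝ) + 1) ≤ DD x}) atTop
    (nhds (ENNReal.ofReal LL)) := by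
  have key := tendsto_measure_iInter_atTop (μ := planeM.prod planeM)
    (s := fun m : ℕ => {x | √3 - 1 / ((m : ℝ) + 1) ≤ DD x})
    (fun m => (isClosed_le continuous_const DD_cont).measurableSet.nullMeasurableSet)
    (by
      intro m m' hmm x hx
      rw [Set.mem_ofPred_eq] at hx ⊢
      have : 1 / ((m' : ℝ) + 1) ≤ 1 / ((m : ℝ) + 1) := by
        apply one_div_le_one_div_of_le (by positivity)
        have : (m : ℝ) ≤ m' := by exact_mod_cast hmm
        linarith
      linarith)
    ⟨0, measure_ne_top _ _⟩
  rwa [prod_mass] at key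
  · exact MeasurableSet.iInter fun m => (isClosed_le continuous_const DD_cont).measurableSet
  · intro x hx
    rw [Set.mem_iInter]
    intro m
    rw [Set.mem_ofPred_eq]
    have : 0 < 1 / ((m : ℝ) + 1) := by positivity
    linarith
  · intro x hx
    rw [Set.mem_iInter] at hx
    have ht : Tendsto (fun m : ℕ => √3 - 1 / ((m : ℝ) + 1)) atTop (nhds (√3 - 0)) :=
      tendsto_const_nhds.sub tendsto_one_div_add_atTop_nhds_zero_nat
    rw [sub_zero] at ht
    exact le_of_tendsto' ht hx

lemma rat_tendsto : Tendsto (fun n => ENNReal.ofReal (rat n)) atTop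
    (nhds (ENNReal.ofReal LL)) := by
  refine tendsto_of_le_liminf_of_limsup_le ?_ ?_
  · have h := ProbabilityMeasure.le_liminf_measure_open_of_tendsto prod_tendsto
      (G := {x | √3 < DD x}) (isOpen_lt continuous_const DD_cont)
    simp only [ProbabilityMeasure.toMeasure_prod, planeP_coe] at h
    rw [prod_mass _ (isOpen_lt continuous_const DD_cont).measurableSet (fun x hx => hx)
      (fun x hx => le_of_lt hx)] at h
    refine h.trans (liminf_le_liminf ?_)
    filter_upwards [ev_nonempty, eventually_gt_atTop 0] with n hn hn0
    rw [empP_coe hn]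
    exact lower_bound hn0 hn
  · refine ge_of_tendsto' inter_tendsto (fun m => ?_)
    have h := ProbabilityMeasure.limsup_measure_closed_le_of_tendsto prod_tendsto
      (F := {x | √3 - 1 / ((m : ℝ) + 1) ≤ DD x}) (isClosed_le continuous_const DD_cont)
    simp only [ProbabilityMeasure.toMeasure_prod, planeP_coe] at h
    refine le_trans (limsup_le_limsup ?_) h
    filter_upwards [ev_nonempty, eventually_gt_atTop 0, eventually_ge_atTop (4 * (m + 1))]
      with n hn hn0 hm
    rw [empP_coe hn]
    exact upper_bound hn0 hm hn

theorem bertrand_box_limit :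
    Filter.Tendsto
      (fun n : ℕ => ((longChords n).ncard : ℝ) / ((approx n unitCircle).ncard : ℝ) ^ 2)
      Filter.atTop
      (nhds ((1 + Real.sqrt 3) / 8 - Real.pi * (2 - Real.sqrt 3) / 96)) := by
  have h := (ENNReal.tendsto_toReal ENNReal.ofReal_ne_top).comp rat_tendsto
  rw [ENNReal.toReal_ofReal LL_nonneg] at h
  refine h.congr (fun n => ?_)
  simp only [Function.comp]
  rw [ENNReal.toReal_ofReal (by unfold rat; positivity)]
  rfl
end
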